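/- Let q be a prime power and n an integer with 1 < n < q and (n-1) dividing (q-1). Then every element of the finite field F_q is the sum of a 5-potent element and an n-potent element if and only if the pair (q,n) is one of (3,2), (5,2), (5,3), (7,4), (9,3), (9,5), (13,5), (13,7), (17,9), (25,9), (25,13), (29,15), (41,21), (49,25), (53,27), (73,37), (81,41), (125,63). -/

import Mathlib

namespace HasseCubic

open Polynomial

/-- Homogeneous coefficients of the quadratic satisfied by the abscissas of `P + Q` and `P - Q`
on `y² = x³ + a x² + b x + c`, where `x(P) = p / r` and `x(Q) = t`. -/
def prodForm {R : Type*} [CommRing R] (a b c t p r : R) : R :=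
  p ^ 2 * t ^ 2 - 2 * b * p * r * t - 4 * c * r * (p + t * r) + (b ^ 2 - 4 * a * c) * r ^ 2

/-- See `prodForm`. -/
def sumForm {R : Type*} [CommRing R] (a b c t p r : R) : R :=
  2 * p * t * (p + t * r) + 4 * a * p * t * r + 2 * b * r * (p + t * r) + 4 * c * r ^ 2

/-- The symmetric relation between the abscissas of `P` and `P + Q`. -/
def adjForm {R : Type*} [CommRing R] (a b c t p r p' r' : R) : R :=
  (p - t * r) ^ 2 * p' ^ 2 - sumForm a b c t p r * p' * r' + prodForm a b c t p r * r' ^ 2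

theorem adjForm_symm {R : Type*} [CommRing R] (a b c t p r p' r' : R) :
    adjForm a b c t p r p' r' = adjForm a b c t p' r' p r := by
  unfold adjForm sumForm prodForm; ring

/-- Vieta jumping in an integral domain. -/
theorem exists_other_root {R : Type*} [CommRing R] [IsDomain R] {A B C p r : R}
    (hp : p ≠ 0) (hc : IsCoprime p r) (h : C * p ^ 2 - B * p * r + A * r ^ 2 = 0) :
    ∃ p' r', p * p' = A ∧ r * r' = C ∧ p * r' + p' * r = B := by
  have h1 : p ∣ A := by
    have : p ∣ A * r ^ 2 := ⟨B * r - C * p, by linear_combination h⟩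
    exact (hc.pow_right).dvd_of_dvd_mul_right this
  obtain ⟨p', rfl⟩ := h1
  have h2 : C * p - B * r + p' * r ^ 2 = 0 := by
    apply mul_left_cancel₀ hp; linear_combination h
  by_cases hr : r = 0
  · subst hr
    have hu : IsUnit p := isCoprime_zero_right.1 hc
    obtain ⟨v, hv⟩ := hu.exists_right_inv
    have hC : C = 0 := by
      have : C * p = 0 := by linear_combination h2
      simpa [hp] using this
    refine ⟨p', v * B, rfl, by simp [hC], ?_⟩
    linear_combination B * hv
  · have h3 : r ∣ C := by
      have : r ∣ C * p := ⟨B - p' * r, by linear_combination h2⟩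
      exact hc.symm.dvd_of_dvd_mul_right this
    obtain ⟨r', rfl⟩ := h3
    refine ⟨p', r', rfl, rfl, ?_⟩
    apply mul_left_cancel₀ hr; linear_combination h2

variable {F : Type*} [Field F]

/-- The discriminant of `x³ + a x² + b x + c`. -/
def disc {R : Type*} [CommRing R] (a b c : R) : R :=
  a ^ 2 * b ^ 2 - 4 * b ^ 3 - 4 * a ^ 3 * c - 27 * c ^ 2 + 18 * a * b * c

theorem disc_bezout {R : Type*} [CommRing R] (a b c t : R) :
    disc a b c = ((18 * b - 6 * a ^ 2) * t + 15 * a * b - 4 * a ^ 3 - 27 * c) *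
        (t ^ 3 + a * t ^ 2 + b * t + c) -
      ((6 * b - 2 * a ^ 2) * t ^ 2 + (7 * a * b - 2 * a ^ 3 - 9 * c) * t
        + 4 * b ^ 2 - a ^ 2 * b - 3 * a * c) * (3 * t ^ 2 + 2 * a * t + b) := by
  unfold disc; ring

theorem not_dvd_forms (h2 : (2 : F) ≠ 0) {a b c : F} (hd : disc a b c ≠ 0) {p r π : F[X]}
    (hπ : Prime π) (hpr : IsCoprime p r)
    (hA : π ∣ prodForm (C a) (C b) (C c) X p r) (hB : π ∣ sumForm (C a) (C b) (C c) X p r)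
    (hC : π ∣ (p - X * r) ^ 2) : False := by
  have h1 : π ∣ p - X * r := hπ.dvd_of_dvd_pow hC
  have hr : ¬ π ∣ r := fun hr => by
    have hp : π ∣ p := by simpa using dvd_add h1 (hr.mul_left X)
    exact hπ.not_isUnit (hpr.isUnit_of_dvd' hp hr)
  set f : F[X] := X ^ 3 + C a * X ^ 2 + C b * X + C c with hf
  set f' : F[X] := 3 * X ^ 2 + 2 * C a * X + C b with hf'
  have hcancel : ∀ g : F[X], π ∣ g * r ^ 2 → π ∣ g := fun g hg =>
    (hπ.dvd_or_dvd hg).resolve_right fun h => hr (hπ.dvd_of_dvd_pow h)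
  have h4 : IsUnit (4 : F[X]) := by
    have : (4 : F[X]) = C 4 := (C_ofNat 4).symm
    rw [this, isUnit_C, isUnit_iff_ne_zero]
    intro h; apply h2
    have : (2 : F) * 2 = 0 := by linear_combination h
    simpa using this
  have hfd : π ∣ f := by
    have : π ∣ 4 * f := by
      apply hcancel
      have e : 4 * f * r ^ 2 = sumForm (C a) (C b) (C c) X p r - (p - X * r) *
        (2 * X * (p + 2 * X * r) + 4 * C a * X * r + 2 * C b * r) := by
        rw [hf]; unfold sumForm; ring
      rw [e]; exact dvd_sub hB (h1.mul_right _)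
    exact (h4.dvd_mul_left).1 this
  have hfd' : π ∣ f' := by
    apply hπ.dvd_of_dvd_pow (n := 2)
    have : π ∣ f' ^ 2 - (8 * X + 4 * C a) * f := by
      apply hcancel
      have e : (f' ^ 2 - (8 * X + 4 * C a) * f) * r ^ 2 =
        prodForm (C a) (C b) (C c) X p r - (p - X * r) *
        (X ^ 2 * (p + X * r) - 2 * C b * r * X - 4 * C c * r) := by
        rw [hf, hf']; unfold prodForm; ring
      rw [e]; exact dvd_sub hA (h1.mul_right _)
    rwa [dvd_sub_left (hfd.mul_left _)] at this
  have : π ∣ disc (C a) (C b) (C c) := by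
    rw [disc_bezout (C a) (C b) (C c) X]
    exact dvd_sub (hfd.mul_left _) (hfd'.mul_left _)
  have e : disc (C a) (C b) (C c) = C (disc a b c) := by
    unfold disc; simp [C_ofNat]
  rw [e] at this
  exact hπ.not_isUnit (isUnit_of_dvd_unit this (isUnit_C.2 (isUnit_iff_ne_zero.2 hd)))

theorem natDegree_X_mul_le_of_degree_lt {p r : F[X]} (h : r.degree < p.degree) :
    (X * r).natDegree ≤ p.natDegree := by
  by_cases hr : r = 0
  · simp [hr]
  · rw [natDegree_X_mul hr]
    exact natDegree_lt_natDegree hr h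

theorem natDegree_prodForm (a b c : F) {p r : F[X]} (hp : p ≠ 0) (h : r.degree < p.degree) :
    (prodForm (C a) (C b) (C c) X p r).natDegree = 2 * p.natDegree + 2 := by
  have hX : (X * r).natDegree ≤ p.natDegree := natDegree_X_mul_le_of_degree_lt h
  have hr : r.natDegree ≤ p.natDegree := natDegree_le_natDegree h.le
  have e : prodForm (C a) (C b) (C c) X p r = X ^ 2 * p ^ 2 +
      (C (-2 * b) * (p * (X * r)) + C (-4 * c) * (r * (p + X * r)) +
        C (b ^ 2 - 4 * a * c) * (r * r)) := by
    unfold prodForm; simp only [C_mul, C_sub, C_pow, C_neg, C_ofNat]; ring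
  have h1 : (X ^ 2 * p ^ 2).natDegree = 2 * p.natDegree + 2 := by
    rw [natDegree_mul (by simp) (by simp [hp])]; simp; ring
  rw [e, natDegree_add_eq_left_of_natDegree_lt, h1]
  rw [h1]
  refine lt_of_le_of_lt (b := p.natDegree + p.natDegree) ?_ (by omega)
  refine natDegree_add_le_of_degree_le (natDegree_add_le_of_degree_le ?_ ?_) ?_ <;>
    refine (natDegree_C_mul_le _ _).trans (natDegree_mul_le_of_le ?_ ?_) <;> try assumption
  · exact le_rfl
  · exact natDegree_add_le_of_degree_le le_rfl hX

theorem natDegree_sumForm_le (a b c : F) {p r : F[X]} (h : r.degree < p.degree) :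
    (sumForm (C a) (C b) (C c) X p r).natDegree ≤ 2 * p.natDegree + 1 := by
  have hX : (X * r).natDegree ≤ p.natDegree := natDegree_X_mul_le_of_degree_lt h
  have hr : r.natDegree ≤ p.natDegree := natDegree_le_natDegree h.le
  have hs : (p + X * r).natDegree ≤ p.natDegree := natDegree_add_le_of_degree_le le_rfl hX
  have e : sumForm (C a) (C b) (C c) X p r = X * (C 2 * (p * (p + X * r))) +
      (C (4 * a) * (p * (X * r)) + C (2 * b) * (r * (p + X * r)) +
        C (4 * c) * (r * r)) := by
    unfold sumForm; simp only [C_mul, C_ofNat]; ring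
  rw [e]
  refine natDegree_add_le_of_degree_le ?_ ?_
  · refine (natDegree_mul_le_of_le (m := 1) (n := p.natDegree + p.natDegree) natDegree_X_le
      ?_).trans (by omega)
    exact (natDegree_C_mul_le _ _).trans (natDegree_mul_le_of_le le_rfl hs)
  · refine le_trans (b := p.natDegree + p.natDegree) ?_ (by omega)
    refine natDegree_add_le_of_degree_le (natDegree_add_le_of_degree_le ?_ ?_) ?_ <;>
      refine (natDegree_C_mul_le _ _).trans (natDegree_mul_le_of_le ?_ ?_) <;>
        first | assumption | exact le_rfl

/-- Two fractions `p / r`, `p' / r'` in lowest terms, of positive degree, which are abscissas of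
points differing by `Q`. -/
structure Adjacent (a b c : F) (p r p' r' : F[X]) : Prop where
  coprime : IsCoprime p r
  coprime' : IsCoprime p' r'
  degree_lt : r.degree < p.degree
  degree_lt' : r'.degree < p'.degree
  rel : adjForm (C a) (C b) (C c) X p r p' r' = 0

theorem Adjacent.exists_next (h2 : (2 : F) ≠ 0) {a b c : F} (hd : disc a b c ≠ 0)
    {p r p' r' : F[X]} (h : Adjacent a b c p r p' r') :
    ∃ p'' r'', Adjacent a b c p'' r'' p r ∧
      p''.natDegree + p'.natDegree = 2 * p.natDegree + 2 := by
  have hp : p ≠ 0 := ne_zero_of_degree_gt h.degree_lt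
  have hp' : p' ≠ 0 := ne_zero_of_degree_gt h.degree_lt'
  obtain ⟨p'', r'', hA, hC, hB⟩ := exists_other_root hp' h.coprime' h.rel
  have hAd := natDegree_prodForm a b c hp h.degree_lt
  have hBd := natDegree_sumForm_le a b c h.degree_lt
  have hp'' : p'' ≠ 0 := by
    rintro rfl
    rw [← hA] at hAd; simp at hAd
  have hdeg : p''.natDegree + p'.natDegree = 2 * p.natDegree + 2 := by
    rw [← hAd, ← hA, natDegree_mul hp' hp'', add_comm]
  refine ⟨p'', r'', ⟨?_, h.coprime, ?_, h.degree_lt, ?_⟩, hdeg⟩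
  · refine isCoprime_of_prime_dvd (fun hh => hp'' hh.1) fun π hπ h1 h2' => ?_
    refine not_dvd_forms h2 hd hπ h.coprime (hA ▸ h1.mul_left _) (hB ▸ ?_) (hC ▸ h2'.mul_left _)
    exact dvd_add (h2'.mul_left _) (h1.mul_right _)
  · by_contra hlt
    rw [not_lt] at hlt
    have hr'' : r'' ≠ 0 := by rintro rfl; simp at hlt; exact hp'' hlt
    have h3 : (p'' * r').degree < (p' * r'').degree := by
      rw [degree_mul, degree_mul, add_comm]
      rw [degree_eq_natDegree hp', degree_eq_natDegree hp''] at *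
      rw [degree_eq_natDegree hr''] at *
      by_cases hr' : r' = 0
      · subst hr'; rw [degree_zero, WithBot.bot_add]; exact_mod_cast WithBot.bot_lt_coe _
      · have := h.degree_lt'
        rw [degree_eq_natDegree hr', degree_eq_natDegree hp'] at *
        norm_cast at *; omega
    have h4 := degree_add_eq_left_of_degree_lt h3
    rw [hB] at h4
    have h5 := natDegree_eq_of_degree_eq h4
    rw [natDegree_mul hp' hr''] at h5
    have := natDegree_le_natDegree hlt
    omega
  · rw [adjForm_symm]
    unfold adjForm
    rw [← hA, ← hB, ← hC]; ring

theorem Adjacent.exists_natDegree (h2 : (2 : F) ≠ 0) {a b c : F} (hd : disc a b c ≠ 0)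
    {p r p' r' : F[X]} (h : Adjacent a b c p r p' r') (n : ℕ) :
    ∃ P R P' R', Adjacent a b c P R P' R' ∧
      (P'.natDegree : ℤ) = n ^ 2 + n * (p.natDegree - p'.natDegree - 1) + p'.natDegree ∧
      (P.natDegree : ℤ) =
        (n + 1) ^ 2 + (n + 1) * (p.natDegree - p'.natDegree - 1) + p'.natDegree := by
  induction n with
  | zero => exact ⟨p, r, p', r', h, by simp, by simp⟩
  | succ n ih =>
    obtain ⟨P, R, P', R', hh, e1, e2⟩ := ih
    obtain ⟨Q, S, hQ, e3⟩ := hh.exists_next h2 hd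
    refine ⟨Q, S, P, R, hQ, by push_cast; linarith, ?_⟩
    zify at e3; push_cast; linear_combination e3 + 2 * e2 - e1

variable [Fintype F] [DecidableEq F]

/-- The multiplicity of `α` as a forced common zero of numerator and denominator of
`x(Frob - ε Q)`. -/
def mult (f : F[X]) (ε : ℤ) (α : F) : ℕ := (1 + ε * quadraticChar F (f.eval α)).toNat

theorem mult_cases (hF : ringChar F ≠ 2) (f : F[X]) {ε : ℤ} (hε : ε = 1 ∨ ε = -1) (α : F) :
    mult f ε α = 0 ∨ (mult f ε α = 1 ∧ f.eval α = 0) ∨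
      (mult f ε α = 2 ∧ (f.eval α) ^ (Fintype.card F / 2) = (ε : F)) := by
  unfold mult
  rw [← quadraticChar_eq_pow_of_char_ne_two' hF]
  by_cases h0 : f.eval α = 0
  · simp [h0]
  rcases quadraticChar_dichotomy h0 with h | h <;> rcases hε with rfl | rfl <;> simp [h]

theorem sum_mult (f : F[X]) {ε : ℤ} (hε : ε = 1 ∨ ε = -1) :
    ((∑ α, mult f ε α : ℕ) : ℤ) =
      Fintype.card F + ε * ∑ α, quadraticChar F (f.eval α) := by
  have : ∀ α, (mult f ε α : ℤ) = 1 + ε * quadraticChar F (f.eval α) := fun α => by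
    unfold mult
    rw [Int.toNat_of_nonneg]
    by_cases h0 : f.eval α = 0
    · simp [h0]
    rcases quadraticChar_dichotomy h0 with h | h <;> rcases hε with rfl | rfl <;> simp [h]
  push_cast
  simp [this, Finset.sum_add_distrib, Finset.mul_sum]

theorem prod_dvd_of_mult {f : F[X]} {ε : ℤ} {g : F[X]}
    (h : ∀ α, (X - C α) ^ mult f ε α ∣ g) : (∏ α, (X - C α) ^ mult f ε α) ∣ g := by
  refine Finset.prod_dvd_of_coprime (fun a _ b _ hab => ?_) fun α _ => h α
  exact (isCoprime_X_sub_C_of_isUnit_sub (sub_ne_zero.2 hab).isUnit).pow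

theorem frobenius_relation {R : Type*} [CommRing R] {a b c t x y e N : R}
    (hfrob : (t ^ 3 + a * t ^ 2 + b * t + c) * y ^ 2 = x ^ 3 + a * x ^ 2 + b * x + c)
    (he : e ^ 2 = 1)
    (hN : N = x ^ 2 * t + x * t ^ 2 + 2 * a * x * t + b * (x + t) + 2 * c -
      2 * e * ((t ^ 3 + a * t ^ 2 + b * t + c) * y)) :
    N ^ 2 - sumForm a b c t x 1 * N + prodForm a b c t x 1 * (x - t) ^ 2 = 0 := by
  subst hN
  unfold sumForm prodForm
  linear_combination 4 * (t ^ 3 + a * t ^ 2 + b * t + c) ^ 2 * y ^ 2 * he +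
    4 * (t ^ 3 + a * t ^ 2 + b * t + c) * hfrob

theorem exists_coprime_factors {R : Type*} [EuclideanDomain R] {x y : R} (h : x ≠ 0) :
    ∃ g p r, IsCoprime p r ∧ x = g * p ∧ y = g * r := by
  classical
  have hg : EuclideanDomain.gcd x y ≠ 0 := fun h0 =>
    h (EuclideanDomain.gcd_eq_zero_iff.1 h0).1
  obtain ⟨p, hp⟩ := EuclideanDomain.gcd_dvd_left x y
  obtain ⟨r, hr⟩ := EuclideanDomain.gcd_dvd_right x y
  refine ⟨_, p, r, ⟨EuclideanDomain.gcdA x y, EuclideanDomain.gcdB x y, ?_⟩, hp, hr⟩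
  apply mul_left_cancel₀ hg
  linear_combination -EuclideanDomain.gcd_eq_gcd_ab x y -
    EuclideanDomain.gcdA x y * hp - EuclideanDomain.gcdB x y * hr

omit [Fintype F] [DecidableEq F] in
theorem exists_adjacent_of_dvd {a b c : F} {q : ℕ} (hq : 1 < q) {N Dn D : F[X]}
    (hrel : N ^ 2 - sumForm (C a) (C b) (C c) X (X ^ q) 1 * N +
      prodForm (C a) (C b) (C c) X (X ^ q) 1 * Dn = 0)
    (hDn : Dn = (X ^ q - X) ^ 2) (hNdeg : N.natDegree = 2 * q + 1)
    (hDdeg : Dn.natDegree = 2 * q) (hDN : D ∣ N) (hDDn : D ∣ Dn) :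
    ∃ p r : F[X], Adjacent a b c p r (X ^ q) 1 ∧ D.natDegree + p.natDegree ≤ 2 * q + 1 := by
  classical
  have hN0 : N ≠ 0 := by rintro h; rw [h] at hNdeg; simp at hNdeg
  obtain ⟨N', hN'⟩ := hDN
  obtain ⟨M', hM'⟩ := hDDn
  have hD0 : D ≠ 0 := by rintro h; rw [h] at hN'; simp at hN'; exact hN0 hN'
  have hN'0 : N' ≠ 0 := by rintro h; rw [h] at hN'; simp at hN'; exact hN0 hN'
  obtain ⟨g, p, r, hc, hp, hr⟩ : ∃ g p r, IsCoprime p r ∧ N' = g * p ∧ M' = g * r :=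
    exists_coprime_factors hN'0
  have hg0 : g ≠ 0 := by rintro rfl; simp at hp; exact hN'0 hp
  have hp0 : p ≠ 0 := by rintro rfl; simp at hp; exact hN'0 hp
  have hr0 : r ≠ 0 := by
    rintro rfl
    rw [hM', hr] at hDdeg; simp at hDdeg; omega
  have hNd : D.natDegree + (g.natDegree + p.natDegree) = 2 * q + 1 := by
    rw [← hNdeg, hN', natDegree_mul hD0 hN'0, hp, natDegree_mul hg0 hp0]
  have hDnd : D.natDegree + (g.natDegree + r.natDegree) = 2 * q := by
    rw [← hDdeg, hM', hr, natDegree_mul hD0 (mul_ne_zero hg0 hr0), natDegree_mul hg0 hr0]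
  refine ⟨p, r, ⟨hc, isCoprime_one_right, ?_, ?_, ?_⟩, ?_⟩
  · rw [degree_eq_natDegree hp0, degree_eq_natDegree hr0]
    norm_cast; omega
  · rw [degree_one, degree_X_pow]; norm_cast; omega
  · rw [adjForm_symm]
    unfold adjForm
    rw [mul_one]
    apply mul_left_cancel₀ (pow_ne_zero 2 (mul_ne_zero hD0 hg0))
    have e1 : N = D * g * p := by rw [hN', hp, mul_assoc]
    have e2 : Dn = D * g * r := by rw [hM', hr, mul_assoc]
    rw [← hDn]
    linear_combination Dn * hrel + (-Dn * (D * g * p + N) +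
      sumForm (C a) (C b) (C c) X (X ^ q) 1 * D * g * r) * e1 +
      (sumForm (C a) (C b) (C c) X (X ^ q) 1 * N -
       prodForm (C a) (C b) (C c) X (X ^ q) 1 * (D * g * r + Dn)) * e2
  · omega

theorem exists_adjacent_frobenius (hF : ringChar F ≠ 2) (a b c : F)
    {ε : ℤ} (hε : ε = 1 ∨ ε = -1) :
    ∃ p r : F[X], Adjacent a b c p r (X ^ Fintype.card F) 1 ∧
      (p.natDegree : ℤ) ≤ Fintype.card F + 1 -
        ε * ∑ x : F, quadraticChar F (x ^ 3 + a * x ^ 2 + b * x + c) := by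
  set q := Fintype.card F with hq
  have hq1 : 1 < q := Fintype.one_lt_card
  have hodd : q % 2 = 1 := FiniteField.odd_card_of_char_ne_two hF
  set m := q / 2 with hm
  set f : F[X] := X ^ 3 + C a * X ^ 2 + C b * X + C c with hf
  have hfeval : ∀ x, f.eval x = x ^ 3 + a * x ^ 2 + b * x + c := fun x => by simp [hf]
  have hfrob : f * (f ^ m) ^ 2 = (X ^ q) ^ 3 + C a * (X ^ q) ^ 2 + C b * X ^ q + C c := by
    have : f * (f ^ m) ^ 2 = f ^ q := by
      rw [← pow_mul, ← pow_succ']; congr 1; omega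
    rw [this, ← FiniteField.expand_card, hf]
    simp [hq]
  have hε2 : (C (ε : F) : F[X]) ^ 2 = 1 := by
    rcases hε with rfl | rfl <;> simp
  set Dn : F[X] := (X ^ q - X) ^ 2 with hDn
  set N : F[X] := f * (f ^ m - C (ε : F)) ^ 2 - (X ^ q + X + C a) * Dn with hN
  have hN2 : N = X ^ (2 * q + 1) + (X ^ q * X ^ 2 + (C (2 * a) * (X ^ q * X) +
      (C b * (X ^ q + X) + (C (2 * c) + C (-2 * ε : F) * (f * f ^ m))))) := by
    have e : X ^ (2 * q + 1) = (X ^ q) ^ 2 * (X : F[X]) := by ring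
    rw [hN, hDn, e]
    simp only [C_mul, C_neg, C_ofNat]
    generalize f ^ m = y at *
    generalize (X : F[X]) ^ q = x at *
    linear_combination hfrob + f * hε2 + hf
  have hrel : N ^ 2 - sumForm (C a) (C b) (C c) X (X ^ q) 1 * N +
      prodForm (C a) (C b) (C c) X (X ^ q) 1 * Dn = 0 := by
    refine frobenius_relation (e := C (ε : F)) (y := f ^ m) (by rw [← hf]; exact hfrob) hε2 ?_
    rw [hN2]
    simp only [C_mul, C_neg, C_ofNat, ← hf]
    ring
  have hNdeg : N.natDegree = 2 * q + 1 := by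
    have hf3 : f.natDegree ≤ 3 := by rw [hf]; compute_degree
    rw [hN2, natDegree_add_eq_left_of_natDegree_lt, natDegree_X_pow]
    rw [natDegree_X_pow, Nat.lt_succ_iff]
    refine natDegree_add_le_of_degree_le ?_ (natDegree_add_le_of_degree_le ?_
      (natDegree_add_le_of_degree_le ?_ (natDegree_add_le_of_degree_le ?_ ?_)))
    · rw [← pow_add, natDegree_X_pow]; omega
    · refine (natDegree_C_mul_le _ _).trans ?_
      rw [← pow_succ, natDegree_X_pow]; omega
    · refine (natDegree_C_mul_le _ _).trans (natDegree_add_le_of_degree_le ?_ ?_)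
      · rw [natDegree_X_pow]; omega
      · rw [natDegree_X]; omega
    · rw [natDegree_C]; omega
    · refine (natDegree_C_mul_le _ _).trans ?_
      rw [← pow_succ']
      refine (natDegree_pow_le_of_le _ hf3).trans ?_
      omega
  have hDdeg : Dn.natDegree = 2 * q := by
    rw [hDn, natDegree_pow, FiniteField.X_pow_card_sub_X_natDegree_eq _ hq1]
  set D : F[X] := ∏ α, (X - C α) ^ mult f ε α with hD
  have hroot : ∀ α : F, X - C α ∣ (X ^ q - X : F[X]) := fun α => by
    rw [dvd_iff_isRoot]; simp [hq, FiniteField.pow_card]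
  have hDDn : D ∣ Dn := by
    refine prod_dvd_of_mult fun α => ?_
    refine (pow_dvd_pow (X - C α) (n := 2) ?_).trans (pow_dvd_pow_of_dvd (hroot α) 2)
    rcases mult_cases hF f hε α with h | h | h <;> omega
  have hDN : D ∣ N := by
    refine dvd_sub (prod_dvd_of_mult fun α => ?_) (hDDn.mul_left _)
    rcases mult_cases hF f hε α with h | ⟨h, h0⟩ | ⟨h, h0⟩
    · simp [h]
    · rw [h, pow_one]; exact (dvd_iff_isRoot.2 h0).mul_right _
    · rw [h]
      refine (pow_dvd_pow_of_dvd (dvd_iff_isRoot.2 ?_) 2).mul_left _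
      simp [IsRoot, ← hq, ← hm] at h0 ⊢
      rw [h0, sub_self]
  have hDd : (D.natDegree : ℤ) = q + ε * ∑ x : F, quadraticChar F (f.eval x) := by
    rw [← sum_mult f hε, hD, natDegree_prod _ _ fun α _ => pow_ne_zero _ (X_sub_C_ne_zero α)]
    simp
  obtain ⟨p, r, hpr, hle⟩ := exists_adjacent_of_dvd hq1 hrel (hDn ▸ rfl) hNdeg hDdeg hDN hDDn
  refine ⟨p, r, hpr, ?_⟩
  simp only [hfeval] at hDd
  zify at hle
  linarith

/-- Hasse's bound for the number of points of `y² = x³ + a x² + b x + c` (up to parity). -/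
theorem sq_sum_quadraticChar_le (hF : ringChar F ≠ 2) {a b c : F} (hd : disc a b c ≠ 0) :
    (∑ x : F, quadraticChar F (x ^ 3 + a * x ^ 2 + b * x + c)) ^ 2 ≤
      4 * (Fintype.card F : ℤ) + 1 := by
  set T := ∑ x : F, quadraticChar F (x ^ 3 + a * x ^ 2 + b * x + c) with hT
  have h2 : (2 : F) ≠ 0 := Ring.two_ne_zero hF
  have key : ∀ ε : ℤ, (ε = 1 ∨ ε = -1) → ∀ n : ℕ,
      0 ≤ (n : ℤ) ^ 2 - n * (ε * T) + Fintype.card F := by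
    intro ε hε n
    obtain ⟨p, r, h, hp⟩ := exists_adjacent_frobenius hF a b c hε
    obtain ⟨P, R, P', R', -, e, -⟩ := h.exists_natDegree h2 hd n
    rw [natDegree_X_pow] at e
    have : (n : ℤ) * p.natDegree ≤ n * (Fintype.card F + 1 - ε * T) :=
      mul_le_mul_of_nonneg_left hp (by positivity)
    have := Int.natCast_nonneg P'.natDegree
    nlinarith
  obtain ⟨ε, hε, hεT⟩ : ∃ ε : ℤ, (ε = 1 ∨ ε = -1) ∧ 0 ≤ ε * T := by
    rcases le_total 0 T with h | h
    · exact ⟨1, by simp, by simpa⟩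
    · exact ⟨-1, by simp, by simpa⟩
  have hk := key ε hε (ε * T / 2).toNat
  rw [Int.toNat_of_nonneg (by omega)] at hk
  have hT2 : T ^ 2 = (ε * T) ^ 2 := by rcases hε with rfl | rfl <;> ring
  rw [hT2]
  generalize ε * T = S at *
  obtain ⟨k, rfl | rfl⟩ := Int.even_or_odd' S
  · have : 2 * k / 2 = k := by omega
    rw [this] at hk; nlinarith
  · have : (2 * k + 1) / 2 = k := by omega
    rw [this] at hk; nlinarith

end HasseCubic

/-! ### Quadratic character sums -/

namespace QuadSum

open Finset HasseCubic

variable {F : Type*} [Field F] [Fintype F] [DecidableEq F]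

local notation "χ" => quadraticChar F

/-- The Hasse bound for a field with `q` elements, as an integer. -/
def hasseBound (q : ℕ) : ℤ := Nat.sqrt (4 * q + 1)

omit [DecidableEq F] in
theorem sum_inv (φ : F → ℤ) : ∑ x, φ x⁻¹ = ∑ x, φ x :=
  Fintype.sum_equiv (Function.Involutive.toPerm _ inv_inv) _ _ fun _ => rfl

omit [DecidableEq F] in
theorem sum_comp_sub (φ : F → ℤ) (c : F) : ∑ x, φ (x - c) = ∑ x, φ x :=
  Fintype.sum_equiv (Equiv.subRight c) _ _ fun _ => rfl

omit [DecidableEq F] in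
theorem sum_comp_mul (φ : F → ℤ) {k : F} (hk : k ≠ 0) : ∑ x, φ (k * x) = ∑ x, φ x :=
  Fintype.sum_equiv (Equiv.mulLeft₀ k hk) _ _ fun _ => rfl

theorem char_mul_sq (a : F) {b : F} (hb : b ≠ 0) : χ (a * b ^ 2) = χ a := by
  rw [map_mul, quadraticChar_sq_one' hb, mul_one]

/-- The substitution `x = s + 1 / v`. -/
theorem sum_shift_inv (φ : F → ℤ) (s : F) :
    ∑ x, φ x = φ s + ∑ v ∈ univ.erase 0, φ (s + v⁻¹) := by
  have h := sum_inv fun x => φ (s + x)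
  have h' := sum_comp_sub (fun x => φ (s + x)) s
  simp only [add_sub_cancel] at h'
  rw [h', ← h, ← add_sum_erase _ _ (mem_univ (0 : F))]
  simp

theorem abs_cubic_le (hF : ringChar F ≠ 2) {a b c : F} (hd : disc a b c ≠ 0) :
    |∑ x : F, χ (x ^ 3 + a * x ^ 2 + b * x + c)| ≤ hasseBound (Fintype.card F) := by
  have h := sq_sum_quadraticChar_le hF hd
  rw [Int.abs_eq_natAbs, hasseBound]
  refine Nat.cast_le.2 (Nat.le_sqrt'.2 ?_)
  zify
  simpa using h

theorem abs_cubic_le' (hF : ringChar F ≠ 2) {k a b c : F} (hk : k ≠ 0)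
    (hd : a ^ 2 * b ^ 2 - 4 * k * b ^ 3 - 4 * a ^ 3 * c - 27 * k ^ 2 * c ^ 2 +
      18 * k * a * b * c ≠ 0) :
    |∑ x : F, χ (k * x ^ 3 + a * x ^ 2 + b * x + c)| ≤ hasseBound (Fintype.card F) := by
  have hd' : disc a (k * b) (k ^ 2 * c) ≠ 0 := by
    have := mul_ne_zero (pow_ne_zero 2 hk) hd
    convert this using 1
    unfold disc; ring
  convert abs_cubic_le hF hd' using 2
  rw [← sum_comp_mul (fun z => χ (z ^ 3 + a * z ^ 2 + k * b * z + k ^ 2 * c)) hk]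
  refine sum_congr rfl fun x _ => ?_
  rw [← char_mul_sq (k * x ^ 3 + a * x ^ 2 + b * x + c) hk]
  congr 1; ring

theorem abs_quartic_le (hF : ringChar F ≠ 2) {a b c s : F} (hd : disc a b c ≠ 0)
    (hs : s ^ 3 + a * s ^ 2 + b * s + c ≠ 0) :
    |∑ x : F, χ ((x - s) * (x ^ 3 + a * x ^ 2 + b * x + c))| ≤
      hasseBound (Fintype.card F) + 1 := by
  have hd' : (3 * s ^ 2 + 2 * a * s + b) ^ 2 * (3 * s + a) ^ 2 -
      4 * (s ^ 3 + a * s ^ 2 + b * s + c) * (3 * s + a) ^ 3 -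
      4 * (3 * s ^ 2 + 2 * a * s + b) ^ 3 * 1 -
      27 * (s ^ 3 + a * s ^ 2 + b * s + c) ^ 2 * 1 ^ 2 +
      18 * (s ^ 3 + a * s ^ 2 + b * s + c) * (3 * s ^ 2 + 2 * a * s + b) * (3 * s + a) * 1 ≠ 0 := by
    convert hd using 1
    unfold disc; ring
  have h := abs_cubic_le' hF hs hd'
  rw [← add_sum_erase _ _ (mem_univ (0 : F))] at h
  rw [sum_shift_inv _ s]
  have e : ∑ v ∈ univ.erase 0, χ ((s + v⁻¹ - s) *
      ((s + v⁻¹) ^ 3 + a * (s + v⁻¹) ^ 2 + b * (s + v⁻¹) + c)) =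
      ∑ v ∈ univ.erase 0, χ ((s ^ 3 + a * s ^ 2 + b * s + c) * v ^ 3 +
        (3 * s ^ 2 + 2 * a * s + b) * v ^ 2 + (3 * s + a) * v + 1) := by
    refine sum_congr rfl fun v hv => ?_
    have hv : v ≠ 0 := ne_of_mem_erase hv
    rw [← char_mul_sq _ (pow_ne_zero 2 hv)]
    congr 1
    field_simp
    ring
  rw [e]
  simp only [sub_self, zero_mul, quadraticChar_zero, zero_add]
  simp only [ne_eq, OfNat.ofNat_ne_zero, not_false_eq_true, zero_pow, mul_zero, zero_add,
    map_one] at h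
  rw [abs_le] at *
  constructor <;> linarith [h.1, h.2]

theorem sum_char (hF : ringChar F ≠ 2) : ∑ x, χ x = 0 := quadraticChar_sum_zero hF

theorem sum_linear (hF : ringChar F ≠ 2) {k : F} (hk : k ≠ 0) (c : F) :
    ∑ x, χ (k * x + c) = 0 := by
  rw [sum_comp_mul (fun x => χ (x + c)) hk, ← sum_char hF, ← sum_comp_sub χ (-c)]
  simp only [sub_neg_eq_add]

theorem sum_pair (hF : ringChar F ≠ 2) {a b : F} (hab : a ≠ b) :
    ∑ x, χ ((x - a) * (x - b)) = -1 := by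
  rw [sum_shift_inv _ a]
  have h := sum_linear hF (sub_ne_zero.2 hab) 1
  rw [← add_sum_erase _ _ (mem_univ (0 : F))] at h
  have e : ∑ v ∈ univ.erase 0, χ ((a + v⁻¹ - a) * (a + v⁻¹ - b)) =
      ∑ v ∈ univ.erase 0, χ ((a - b) * v + 1) := by
    refine sum_congr rfl fun v hv => ?_
    have hv : v ≠ 0 := ne_of_mem_erase hv
    rw [← char_mul_sq _ hv]
    congr 1
    field_simp
    ring
  rw [e]
  simp at h ⊢
  linarith

omit [Field F] in
theorem sum_comp_eq (f : F → F) (φ : F → ℤ) (s : Finset F) :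
    ∑ x ∈ s, φ (f x) = ∑ y, φ y * #{x ∈ s | f x = y} := by
  rw [← sum_fiberwise s f]
  refine sum_congr rfl fun y _ => ?_
  rw [sum_congr rfl fun x hx => by rw [(mem_filter.1 hx).2], sum_const, nsmul_eq_mul, mul_comm]

theorem card_quadratic (hF : ringChar F ≠ 2) (s d : F) :
    (#{x : F | x ^ 2 - s * x + d = 0} : ℤ) = 1 + χ (s ^ 2 - 4 * d) := by
  have h2 : (2 : F) ≠ 0 := Ring.two_ne_zero hF
  rw [add_comm, ← quadraticChar_card_sqrts hF]
  norm_cast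
  refine card_bij' (fun x _ => 2 * x - s) (fun y _ => (y + s) / 2) ?_ ?_ ?_ ?_
  · intro x hx
    simp only [mem_filter, mem_univ, true_and] at hx
    simp only [Set.mem_toFinset, Set.mem_ofPred_eq]
    linear_combination 4 * hx
  · intro y hy
    simp only [Set.mem_toFinset, Set.mem_ofPred_eq] at hy
    simp only [mem_filter, mem_univ, true_and]
    field_simp
    linear_combination hy
  · intro x _
    field_simp
    ring
  · intro y _
    field_simp
    ring

/-- The substitution `s = x + d / x`. -/
theorem sum_add_div (hF : ringChar F ≠ 2) {d : F} (hd : d ≠ 0) (φ : F → ℤ) :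
    ∑ x ∈ univ.erase 0, φ (x + d / x) = ∑ s, φ s * (1 + χ (s ^ 2 - 4 * d)) := by
  rw [sum_comp_eq (fun x => x + d / x)]
  refine sum_congr rfl fun s _ => ?_
  rw [← card_quadratic hF]
  congr 3
  ext x
  simp only [mem_filter, mem_erase, mem_univ, and_true, true_and]
  constructor
  · rintro ⟨hx, rfl⟩
    field_simp
    ring
  · intro h
    have hx : x ≠ 0 := by rintro rfl; simp at h; exact hd h
    refine ⟨hx, ?_⟩
    field_simp
    linear_combination h

/-- The substitution `s = x + j² / x` in a sum twisted by the quadratic character. -/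
theorem sum_char_mul_add_div (hF : ringChar F ≠ 2) {j : F} (hj : j ≠ 0) (φ : F → ℤ) :
    ∑ x, χ x * φ (x + j ^ 2 / x) = ∑ s, φ s * (χ (s + 2 * j) + χ (s - 2 * j)) := by
  have h2 : (2 : F) ≠ 0 := Ring.two_ne_zero hF
  have h1 := sum_add_div hF (pow_ne_zero 2 hj)
    fun s => φ s * (χ (s + 2 * j) + χ (s - 2 * j))
  have hχ4 : ∀ y : F, χ (4 * y) = χ y := fun y => by
    rw [← char_mul_sq y h2]; congr 1; ring
  have e1 : ∀ x ∈ univ.erase (0 : F), φ (x + j ^ 2 / x) *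
      (χ (x + j ^ 2 / x + 2 * j) + χ (x + j ^ 2 / x - 2 * j)) =
      2 * (χ x * φ (x + j ^ 2 / x)) - (if x = j then φ (2 * j) * χ j else 0) -
        (if x = -j then φ (-(2 * j)) * χ (-j) else 0) := by
    intro x hx
    have hx : x ≠ 0 := ne_of_mem_erase hx
    have c1 : χ (x + j ^ 2 / x + 2 * j) = if x = -j then 0 else χ x := by
      split_ifs with h
      · rw [h]; convert quadraticChar_zero using 2; field_simp; ring
      · rw [← char_mul_sq _ hx, ← char_mul_sq x (mt add_eq_zero_iff_eq_neg.1 h)]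
        congr 1; field_simp; ring
    have c2 : χ (x + j ^ 2 / x - 2 * j) = if x = j then 0 else χ x := by
      split_ifs with h
      · rw [h]; convert quadraticChar_zero using 2; field_simp; ring
      · rw [← char_mul_sq _ hx, ← char_mul_sq x (sub_ne_zero.2 h)]
        congr 1; field_simp; ring
    rw [c1, c2]
    have hjj : j ≠ -j := fun h => mul_ne_zero h2 hj (by linear_combination h)
    by_cases hxj : x = j
    · subst hxj
      have : x + x ^ 2 / x = 2 * x := by field_simp; ring
      rw [this]; simp [hjj]; ring
    · by_cases hxj' : x = -j
      · have : x + j ^ 2 / x = -(2 * j) := by rw [hxj']; field_simp; ring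
        rw [this]; simp [hxj', hjj.symm]; ring
      · simp [hxj, hxj']; ring
  have e2 : ∀ s, φ s * (χ (s + 2 * j) + χ (s - 2 * j)) * (1 + χ (s ^ 2 - 4 * j ^ 2)) =
      2 * (φ s * (χ (s + 2 * j) + χ (s - 2 * j))) - (if s = 2 * j then φ (2 * j) * χ j else 0) -
        (if s = -(2 * j) then φ (-(2 * j)) * χ (-j) else 0) := by
    intro s
    have hjj : 2 * j ≠ -(2 * j) := fun h => mul_ne_zero h2 (mul_ne_zero h2 hj)
      (by linear_combination h)
    have e : s ^ 2 - 4 * j ^ 2 = (s + 2 * j) * (s - 2 * j) := by ring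
    rw [e, map_mul]
    by_cases h : s = 2 * j
    · have : s + 2 * j = 4 * j := by rw [h]; ring
      rw [this, hχ4, h]; simp [hjj]; ring
    by_cases h' : s = -(2 * j)
    · have : s - 2 * j = 4 * -j := by rw [h']; ring
      rw [this, hχ4, h']; simp [hjj.symm]; ring
    · have a1 := quadraticChar_sq_one (sub_ne_zero.2 h)
      have a2 := quadraticChar_sq_one
        (fun e => h' (add_eq_zero_iff_eq_neg.1 e) : s + 2 * j ≠ 0)
      simp only [h, h', if_false]
      linear_combination φ s * χ (s + 2 * j) * a1 + φ s * χ (s - 2 * j) * a2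
  rw [sum_congr rfl e1, sum_congr rfl fun s _ => e2 s] at h1
  simp only [sum_sub_distrib, ← mul_sum] at h1
  have e3 : ∑ x ∈ univ.erase (0 : F), χ x * φ (x + j ^ 2 / x) =
      ∑ x, χ x * φ (x + j ^ 2 / x) := by
    rw [← add_sum_erase _ _ (mem_univ (0 : F))]; simp
  rw [e3] at h1
  simpa [hj] using h1

end QuadSum

/-! ### Computations in small finite fields -/

section Covering

variable {F : Type*} [Field F]

/-- Every element is the sum of a `5`-potent and an `n`-potent. -/
def IsCovered (F : Type*) [Field F] (n : ℕ) : Prop :=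
  ∀ γ : F, ∃ a b : F, a ^ 5 = a ∧ b ^ n = b ∧ a + b = γ

theorem pow_five_eq_self_iff {I : F} (hI : I ^ 2 = -1) {a : F} :
    a ^ 5 = a ↔ a ∈ [0, 1, -1, I, -I] := by
  have : a ^ 5 - a = a * ((a - 1) * ((a + 1) * ((a - I) * (a + I)))) := by
    linear_combination (a ^ 3 - a) * hI
  rw [← sub_eq_zero, this]
  simp [sub_eq_zero, add_eq_zero_iff_eq_neg]

theorem not_isCovered {I γ : F} (hI : I ^ 2 = -1) {n : ℕ}
    (h : ∀ c ∈ [0, 1, -1, I, -I], (γ - c) ^ n ≠ γ - c) : ¬IsCovered F n := by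
  intro hc
  obtain ⟨a, b, ha, hb, rfl⟩ := hc γ
  exact h a ((pow_five_eq_self_iff hI).1 ha) (by simpa using hb)

end Covering

namespace PrimeField

/-- Search for `g ≥ start` such that `g ^ ((p - 1) / 4)` is a square root of `-1`
modulo `p`; the result is this square root. -/
def sqrtNegOne (p : ℕ) : ℕ → ℕ → ℕ
  | 0, _ => 0
  | fuel + 1, g =>
    if (g ^ ((p - 1) / 4) % p * (g ^ ((p - 1) / 4) % p) + 1) % p = 0 then g ^ ((p - 1) / 4) % p
    else sqrtNegOne p fuel (g + 1)

/-- The residue `u` is an `n`-potent modulo `p`. -/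
def isPotent (p n u : ℕ) : Bool := (u ^ n + (p - 1) * u) % p == 0

/-- Difference of residues. -/
def sub (p u v : ℕ) : ℕ := (u + (p - 1) * v) % p

/-- Search for `γ < fuel` such that no `γ - c`, for `c` in `l`, is an `n`-potent. -/
def findUncovered (p n : ℕ) (l : List ℕ) : ℕ → Bool
  | 0 => false
  | γ + 1 => (l.all fun c => !isPotent p n (sub p γ c)) || findUncovered p n l γ

/-- Certificate that a residue is not the sum of a `5`-potent and an `n`-potent,
given a square root `i` of `-1`. -/
def negCheck (p n i : ℕ) : Bool :=
  (i * i + 1) % p == 0 && findUncovered p n [0, 1, p - 1, i, (p - 1) * i] p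

/-- Certificate that every residue is the sum of a `5`-potent and an `n`-potent. -/
def posCheck (p n i : ℕ) : Bool :=
  (List.range p).all fun γ => [0, 1, p - 1, i, (p - 1) * i].any fun c =>
    isPotent p 5 c && isPotent p n (sub p γ c)

variable {F : Type*} [Field F] {p : ℕ} [CharP F p]

theorem cast_pred (hp : 1 < p) : ((p - 1 : ℕ) : F) = -1 := by
  rw [Nat.cast_sub hp.le, CharP.cast_eq_zero]; simp

theorem cast_mod (a : ℕ) : ((a % p : ℕ) : F) = a := by
  conv_rhs => rw [← Nat.mod_add_div a p]
  simp

theorem isPotent_iff (hp : 1 < p) (n u : ℕ) : isPotent p n u = true ↔ (u : F) ^ n = u := by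
  rw [isPotent, beq_iff_eq, ← Nat.dvd_iff_mod_eq_zero, ← CharP.cast_eq_zero_iff F p]
  push_cast
  rw [cast_pred hp, ← sub_eq_zero (b := (u : F))]
  ring_nf

theorem cast_sub (hp : 1 < p) (u v : ℕ) : ((sub p u v : ℕ) : F) = u - v := by
  rw [sub, cast_mod]
  push_cast
  rw [cast_pred hp]
  ring

theorem exists_of_findUncovered {n : ℕ} {l : List ℕ} {b : ℕ} (h : findUncovered p n l b = true) :
    ∃ γ, ∀ c ∈ l, isPotent p n (sub p γ c) = false := by
  induction b with
  | zero => simp [findUncovered] at h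
  | succ b ih =>
    rw [findUncovered, Bool.or_eq_true] at h
    rcases h with h | h
    · exact ⟨b, by simpa using h⟩
    · exact ih h

theorem not_isCovered_of_negCheck (hp : 1 < p) {n i : ℕ} (h : negCheck p n i = true) :
    ¬IsCovered F n := by
  rw [negCheck, Bool.and_eq_true, beq_iff_eq, ← Nat.dvd_iff_mod_eq_zero,
    ← CharP.cast_eq_zero_iff F p] at h
  obtain ⟨hi, h⟩ := h
  obtain ⟨γ, h⟩ := exists_of_findUncovered h
  push_cast at hi
  refine not_isCovered (F := F) (I := (i : F)) (γ := γ) (by linear_combination hi) fun c hc hn => ?_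
  obtain ⟨d, hd, rfl⟩ : ∃ d ∈ [0, 1, p - 1, i, (p - 1) * i], ((d : ℕ) : F) = c := by
    simpa [cast_pred (F := F) hp, eq_comm] using hc
  rw [← cast_sub hp, ← isPotent_iff hp, h d hd] at hn
  cases hn

theorem isCovered_of_posCheck (hp : 1 < p) [Fintype F] (hF : Fintype.card F = p) {n i : ℕ}
    (h : posCheck p n i = true) : IsCovered F n := by
  intro γ
  obtain ⟨g, hg, rfl⟩ : ∃ g < p, (g : F) = γ := by
    have hinj : Set.InjOn (fun a : ℕ => (a : F)) (Finset.range p) := fun a ha b hb hab => by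
      simp only [Finset.coe_range, Set.mem_Iio] at ha hb
      have := (CharP.natCast_eq_natCast F p).1 hab
      rwa [Nat.ModEq, Nat.mod_eq_of_lt ha, Nat.mod_eq_of_lt hb] at this
    classical
    have : (Finset.range p).image (fun a : ℕ => (a : F)) = Finset.univ := by
      rw [← Finset.card_eq_iff_eq_univ, Finset.card_image_of_injOn hinj, Finset.card_range, hF]
    simpa using (this ▸ Finset.mem_univ γ :)
  rw [posCheck, List.all_eq_true] at h
  obtain ⟨c, -, hc⟩ := List.any_eq_true.1 (h g (List.mem_range.2 hg))
  rw [Bool.and_eq_true, isPotent_iff (F := F) hp, isPotent_iff (F := F) hp, cast_sub hp] at hc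
  exact ⟨c, g - c, hc.1, hc.2, by ring⟩

end PrimeField

namespace CoeffList

/-- Coefficientwise sum modulo `p`, the shorter list being padded with zeros. -/
def add (p : ℕ) : List ℕ → List ℕ → List ℕ
  | [], v => v
  | a :: u, [] => a :: u
  | a :: u, b :: v => Nat.mod (Nat.add a b) p :: add p u v

/-- Multiplication by a scalar modulo `p`. -/
def smul (p c : ℕ) (v : List ℕ) : List ℕ := v.map fun a => Nat.mod (Nat.mul c a) p

/-- Difference modulo `p`. -/
def sub (p : ℕ) (u v : List ℕ) : List ℕ := add p u (smul p (p - 1) v)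

/-- Multiplication by the generator `α`, where `α ^ m.length = ∑ mᵢ αⁱ`. -/
def shift (p : ℕ) (m v : List ℕ) : List ℕ :=
  if v.length = m.length then add p (0 :: v.dropLast) (smul p (v.getLast?.getD 0) m) else 0 :: v

/-- Product of two lists of coefficients. -/
def mul (p : ℕ) (m u v : List ℕ) : List ℕ :=
  u.foldr (fun a acc => add p (smul p a v) (shift p m acc)) []

/-- Binary powering, for exponents `e < 2 ^ fuel`. -/
def powAux (p : ℕ) (m v : List ℕ) : ℕ → ℕ → List ℕ
  | 0, _ => [1]
  | fuel + 1, e =>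
    if e = 0 then [1]
    else if Nat.mod e 2 = 1 then
      mul p m v (mul p m (powAux p m v fuel (Nat.div e 2)) (powAux p m v fuel (Nat.div e 2)))
    else mul p m (powAux p m v fuel (Nat.div e 2)) (powAux p m v fuel (Nat.div e 2))

/-- Power of a list of coefficients, for exponents below `4096`. -/
def pow (p : ℕ) (m v : List ℕ) (e : ℕ) : List ℕ := powAux p m v 12 e

/-- All the coefficients vanish. -/
def isZero (v : List ℕ) : Bool := v.all (· == 0)

/-- The `(q - 1)`-st power is `1`, where `q = p ^ m.length`. -/
def isNonzero (p : ℕ) (m v : List ℕ) : Bool :=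
  isZero (add p (pow p m v (p ^ m.length - 1)) [p - 1])

/-- The generator `α`. -/
def gen (p : ℕ) (m : List ℕ) : List ℕ := shift p m [1]

/-- The polynomial with coefficients given by `m` splits over the field with `p ^ m.length`
elements. -/
def splits (p : ℕ) (m : List ℕ) : Bool :=
  isZero (sub p (pow p m (gen p m) (p ^ m.length)) (gen p m))

/-- The list `0, 1, -1, i, -i`. -/
def fivePotents (p : ℕ) (i : List ℕ) : List (List ℕ) := [[], [1], [p - 1], i, smul p (p - 1) i]

/-- The difference `u ^ n - u`. -/
def powSub (p : ℕ) (m : List ℕ) (n : ℕ) (u : List ℕ) : List ℕ := sub p (pow p m u n) u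

/-- Certificate that the element `γ` of the field with `p ^ m.length` elements is not the
sum of a `5`-potent and an `n`-potent, given a square root `i` of `-1`. -/
def negCheck (p : ℕ) (m : List ℕ) (n : ℕ) (i γ : List ℕ) : Bool :=
  splits p m && isZero (add p (mul p m i i) [1]) &&
    (fivePotents p i).all fun c => isNonzero p m (powSub p m n (sub p γ c))

/-- Certificate that every element of the field with `p ^ m.length` elements is the
sum of a `5`-potent and an `n`-potent. -/
def posCheck (p : ℕ) (m : List ℕ) (n : ℕ) (i : List ℕ) : Bool :=
  splits p m && isNonzero p m (gen p m) && (List.range (p ^ m.length - 1)).all fun l =>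
    ((p ^ m.length - 1) % l != 0 || isNonzero p m (sub p (pow p m (gen p m) l) [1])) &&
    (fivePotents p i).any fun c => isZero (powSub p m 5 c) &&
      isZero (powSub p m n (sub p (pow p m (gen p m) l) c))

section Eval

variable {R : Type*} [CommRing R]

/-- Value of the polynomial with coefficients `v` at `α`. -/
def eval (α : R) : List ℕ → R
  | [] => 0
  | a :: v => a + α * eval α v

theorem eval_append (α : R) (u v : List ℕ) :
    eval α (u ++ v) = eval α u + α ^ u.length * eval α v := by
  induction u with
  | nil => simp [eval]
  | cons a u ih => simp only [List.cons_append, eval, ih, List.length_cons]; ring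

theorem eval_eq_zero (α : R) {v : List ℕ} (h : isZero v = true) : eval α v = 0 := by
  induction v with
  | nil => rfl
  | cons a v ih =>
    simp only [isZero, List.all_cons, Bool.and_eq_true, beq_iff_eq] at h
    simp [eval, h.1, ih h.2]

variable {p : ℕ} [CharP R p]

theorem natCast_mod (a : ℕ) : ((Nat.mod a p : ℕ) : R) = a := by
  change ((a % p : ℕ) : R) = a
  conv_rhs => rw [← Nat.mod_add_div a p]
  simp

theorem eval_add (α : R) (u v : List ℕ) : eval α (add p u v) = eval α u + eval α v := by
  induction u generalizing v with
  | nil => simp [add, eval]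
  | cons a u ih =>
    cases v with
    | nil => simp [add, eval]
    | cons b v =>
      simp only [add, eval, natCast_mod, ih, Nat.add_eq]
      push_cast
      ring

theorem eval_smul (α : R) (c : ℕ) (v : List ℕ) : eval α (smul p c v) = c * eval α v := by
  induction v with
  | nil => simp [smul, eval]
  | cons a v ih =>
    simp only [smul, List.map_cons, eval, natCast_mod, Nat.mul_eq] at ih ⊢
    rw [ih]
    push_cast
    ring

theorem cast_pred (hp : 1 < p) : ((p - 1 : ℕ) : R) = -1 := by
  rw [Nat.cast_sub hp.le, CharP.cast_eq_zero]; simp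

theorem eval_sub (hp : 1 < p) (α : R) (u v : List ℕ) :
    eval α (sub p u v) = eval α u - eval α v := by
  rw [sub, eval_add, eval_smul, cast_pred hp]; ring

variable {α : R} {m : List ℕ} (hα : α ^ m.length = eval α m)
include hα

theorem eval_shift (v : List ℕ) : eval α (shift p m v) = α * eval α v := by
  rw [shift]
  split_ifs with h
  · rw [eval_add, eval_smul, ← hα]
    rcases List.eq_nil_or_concat v with rfl | ⟨u, a, rfl⟩
    · rw [← h]; simp [eval]
    · simp only [List.concat_eq_append, List.dropLast_concat, List.getLast?_concat,
        Option.getD_some, eval_append, eval, ← h, List.length_append, List.length_singleton]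
      push_cast
      ring
  · simp [eval]

theorem eval_mul (u v : List ℕ) : eval α (mul p m u v) = eval α u * eval α v := by
  induction u with
  | nil => simp [mul, eval]
  | cons a u ih =>
    rw [mul, List.foldr_cons, ← mul, eval_add, eval_smul, eval_shift hα, ih, eval]
    ring

theorem eval_powAux (v : List ℕ) {f e : ℕ} (he : e < 2 ^ f) :
    eval α (powAux p m v f e) = eval α v ^ e := by
  induction f generalizing e with
  | zero => simp [powAux, eval, show e = 0 by simpa using he]
  | succ f ih =>
    have h2 : e / 2 < 2 ^ f := by rw [pow_succ] at he; omega
    have hm : Nat.mod e 2 = e % 2 := rfl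
    have hd : Nat.div e 2 = e / 2 := rfl
    rw [powAux, hm, hd]
    split_ifs with h0 h1
    · simp [h0, eval]
    · rw [eval_mul hα, eval_mul hα, ih h2, ← pow_add, ← pow_succ']
      congr 1; omega
    · rw [eval_mul hα, ih h2, ← pow_add]
      congr 1; omega

theorem eval_pow (v : List ℕ) {e : ℕ} (he : e < 4096) :
    eval α (pow p m v e) = eval α v ^ e := eval_powAux hα v he

theorem eval_gen : eval α (gen p m) = α := by
  rw [gen, eval_shift hα]; simp [eval]

theorem eval_powSub (hp : 1 < p) (v : List ℕ) {e : ℕ} (he : e < 4096) :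
    eval α (powSub p m e v) = eval α v ^ e - eval α v := by
  rw [powSub, eval_sub hp, eval_pow hα v he]

theorem eval_ne_zero [Nontrivial R] (hp : 1 < p) (hm : m ≠ []) (hq : p ^ m.length ≤ 4096)
    {v : List ℕ} (h : isNonzero p m v = true) : eval α v ≠ 0 := by
  intro h0
  have hm' : m.length ≠ 0 := by simpa using hm
  have h1 := Nat.one_lt_pow hm' hp
  have := eval_eq_zero α h
  rw [eval_add, eval_pow hα v (by omega), h0, zero_pow (by omega)] at this
  simp [eval, cast_pred hp] at this

end Eval

open Polynomial in
theorem exists_root {F : Type*} [Field F] [Fintype F] {p : ℕ} [Fact p.Prime] [CharP F p]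
    {m : List ℕ} (hm : m ≠ []) (hF : Fintype.card F = p ^ m.length) (hq : p ^ m.length < 4096)
    (h : splits p m = true) : ∃ α : F, α ^ m.length = eval α m := by
  have hp : 1 < p := (Fact.out : p.Prime).one_lt
  set e : F[X] := eval X m with he
  have hdeg : ∀ v : List ℕ, (eval (X : F[X]) v).degree < v.length := by
    intro v
    induction v with
    | nil => simp [eval]
    | cons a v ih =>
      rw [eval, List.length_cons]
      refine (degree_add_le _ _).trans_lt (max_lt ?_ ?_)
      · refine (degree_natCast_le _).trans_lt (by norm_cast; omega)
      · rw [degree_mul, degree_X, Nat.cast_succ, add_comm]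
        exact WithBot.add_lt_add_of_lt_of_le (by simp) ih le_rfl
  set M : F[X] := X ^ m.length - e with hM
  have hMdeg : M.degree = m.length := by
    rw [hM, degree_sub_eq_left_of_degree_lt, degree_X_pow]
    rw [degree_X_pow]
    exact hdeg m
  have heval : ∀ (S : Type _) [CommRing S] (φ : F[X] →+* S) (v : List ℕ),
      φ (eval X v) = eval (φ X) v := by
    intro S _ φ v
    induction v with
    | nil => simp [eval]
    | cons a v ih => simp [eval, ih]
  have hroot : (AdjoinRoot.mk M X) ^ m.length = eval (AdjoinRoot.mk M X) m := by
    rw [← heval, ← map_pow, ← sub_eq_zero, ← map_sub, AdjoinRoot.mk_self]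
  have : CharP (AdjoinRoot M) p := by
    have : Nontrivial (AdjoinRoot M) := AdjoinRoot.nontrivial M (by
      rw [hMdeg]; simpa using hm)
    exact charP_of_injective_algebraMap (algebraMap F (AdjoinRoot M)).injective p
  have h1 := eval_eq_zero (AdjoinRoot.mk M X) h
  rw [eval_sub hp, eval_pow hroot _ hq, eval_gen hroot, ← hF, ← map_pow, ← map_sub,
    AdjoinRoot.mk_eq_zero] at h1
  have hs : (X ^ Fintype.card F - X : F[X]).Splits := by
    refine splits_iff_card_roots.2 ?_
    rw [FiniteField.roots_X_pow_card_sub_X,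
      FiniteField.X_pow_card_sub_X_natDegree_eq _ Fintype.one_lt_card]
    rfl
  obtain ⟨α, hα⟩ := (hs.of_dvd (FiniteField.X_pow_card_sub_X_ne_zero F Fintype.one_lt_card)
    h1).exists_eval_eq_zero (by rw [hMdeg]; simpa using hm)
  refine ⟨α, ?_⟩
  have := heval F (evalRingHom α) m
  simp [hM, he] at hα this
  rw [this] at hα
  linear_combination hα

section Sound

variable {F : Type*} [Field F] [Fintype F] {p : ℕ} [Fact p.Prime] [CharP F p]
  {m : List ℕ} {n : ℕ} {i : List ℕ}

theorem not_isCovered_of_negCheck (hm : m ≠ []) (hF : Fintype.card F = p ^ m.length)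
    (hq : p ^ m.length < 4096) (hn : n < 4096) {γ : List ℕ} (h : negCheck p m n i γ = true) :
    ¬IsCovered F n := by
  have hp : 1 < p := (Fact.out : p.Prime).one_lt
  simp only [negCheck, Bool.and_eq_true, List.all_eq_true] at h
  obtain ⟨⟨hs, hi⟩, h⟩ := h
  obtain ⟨α, hα⟩ := exists_root (F := F) hm hF hq hs
  have hi := eval_eq_zero α hi
  rw [eval_add, eval_mul hα] at hi
  refine not_isCovered (I := eval α i) (γ := eval α γ) ?_ fun c hc hn' => ?_
  · simp [eval] at hi; linear_combination hi
  obtain ⟨d, hd, rfl⟩ : ∃ d ∈ fivePotents p i, eval α d = c := by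
    simpa [fivePotents, eval_smul, eval, cast_pred (R := F) hp, eq_comm] using hc
  refine eval_ne_zero hα hp hm hq.le (h d hd) ?_
  rw [eval_powSub hα hp _ hn, eval_sub hp, hn', sub_self]

theorem isCovered_of_posCheck (hm : m ≠ []) (hF : Fintype.card F = p ^ m.length)
    (hq : p ^ m.length < 4096) (hn : n < 4096) (hn0 : n ≠ 0) (h : posCheck p m n i = true) :
    IsCovered F n := by
  have hp : 1 < p := (Fact.out : p.Prime).one_lt
  simp only [posCheck, Bool.and_eq_true, List.all_eq_true, List.mem_range, Bool.or_eq_true,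
    bne_iff_ne, List.any_eq_true] at h
  obtain ⟨⟨hs, hg⟩, h⟩ := h
  obtain ⟨α, hα⟩ := exists_root (F := F) hm hF hq hs
  have hg := eval_ne_zero hα hp hm hq.le hg
  rw [eval_gen hα] at hg
  have hprim : IsPrimitiveRoot α (Fintype.card F - 1) := by
    have hdvd : orderOf α ∣ Fintype.card F - 1 :=
      orderOf_dvd_of_pow_eq_one (FiniteField.pow_card_sub_one_eq_one α hg)
    have hpos : 0 < Fintype.card F - 1 := Nat.sub_pos_of_lt Fintype.one_lt_card
    rcases (Nat.le_of_dvd hpos hdvd).lt_or_eq with hlt | heq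
    · exfalso
      rw [hF] at hlt hdvd
      obtain ⟨hl, -⟩ := h _ hlt
      rcases hl with hl | hl
      · exact hl (Nat.mod_eq_zero_of_dvd hdvd)
      · refine eval_ne_zero hα hp hm hq.le hl ?_
        rw [eval_sub hp, eval_pow hα _ (by omega), eval_gen hα, pow_orderOf_eq_one]
        simp [eval]
    · rw [← heq]; exact IsPrimitiveRoot.orderOf α
  intro γ
  by_cases hγ : γ = 0
  · exact ⟨0, 0, by simp, by simp [hn0], by simp [hγ]⟩
  have : NeZero (Fintype.card F - 1) := ⟨(Nat.sub_pos_of_lt Fintype.one_lt_card).ne'⟩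
  obtain ⟨l, hl, rfl⟩ := hprim.eq_pow_of_pow_eq_one (FiniteField.pow_card_sub_one_eq_one γ hγ)
  rw [hF] at hl
  obtain ⟨-, c, -, h5, hcn⟩ := h l hl
  have h5 := eval_eq_zero α h5
  have hcn := eval_eq_zero α hcn
  rw [eval_powSub hα hp _ (by omega)] at h5
  rw [eval_powSub hα hp _ hn, eval_sub hp, eval_pow hα _ (by omega), eval_gen hα] at hcn
  exact ⟨eval α c, α ^ l - eval α c, sub_eq_zero.1 h5, sub_eq_zero.1 hcn, by ring⟩

end Sound

end CoeffList

namespace SmallFields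

/-- The pairs `(q, n)` of the classification. -/
def pairs : List (ℕ × ℕ) := [(3, 2), (5, 2), (5, 3), (7, 4), (9, 3), (9, 5), (13, 5), (13, 7),
  (17, 9), (25, 9), (25, 13), (29, 15), (41, 21), (49, 25), (53, 27), (73, 37), (81, 41),
  (125, 63)]

/-- Pairs `(k, b)`: the fields with at most `b` elements are tested for `n = (q - 1) / k + 1`. -/
def bounds : List (ℕ × ℕ) := [(2, 1237), (3, 2092), (4, 125), (6, 13), (8, 9)]

/-- Certificates `(p, m, n, i, γ)` for `CoeffList.negCheck`. -/
def certificates : List (ℕ × List ℕ × ℕ × List ℕ × List ℕ) :=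
  [(3, [1, 1], 2, [1, 1], [0, 1]), (5, [2, 2], 7, [3, 0], [0, 2]),
   (7, [2, 2], 17, [4, 3], [3, 0]), (7, [2, 2], 13, [4, 3], [1, 1]),
   (3, [1, 0, 0, 1], 21, [2, 0, 2, 2], [2, 0, 1, 0]), (11, [3, 1], 61, [7, 8], [3, 4]),
   (11, [3, 1], 41, [7, 8], [3, 1]), (11, [3, 1], 31, [7, 8], [5, 1]),
   (5, [2, 0, 1], 32, [2, 0, 0], [0, 1, 0]), (13, [2, 4], 85, [5, 0], [11, 1]),
   (13, [2, 4], 57, [5, 0], [1, 1]), (17, [3, 4], 145, [13, 0], [13, 2]),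
   (17, [3, 4], 97, [13, 0], [4, 1]), (19, [4, 4], 181, [16, 11], [0, 2]),
   (19, [4, 4], 121, [16, 11], [3, 0]), (23, [2, 5], 265, [3, 8], [20, 1]),
   (23, [2, 5], 177, [3, 8], [0, 1]), (5, [2, 0, 2, 1], 313, [3, 0, 0, 0], [0, 3, 1, 1]),
   (5, [2, 0, 2, 1], 209, [3, 0, 0, 0], [0, 2, 0, 1]),
   (3, [1, 0, 0, 0, 0, 1], 365, [0, 2, 0, 2, 1, 1], [0, 1, 0, 0, 1, 0]),
   (29, [2, 2], 421, [17, 0], [12, 2]), (29, [2, 2], 281, [17, 0], [9, 1]),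
   (31, [7, 1], 481, [27, 8], [1, 2]), (31, [7, 1], 321, [27, 8], [6, 0]),
   (37, [2, 3], 457, [6, 0], [3, 0]), (41, [6, 6], 561, [32, 0], [2, 1]),
   (43, [9, 1], 617, [6, 31], [6, 0])]

/-- A sieve which keeps all primes. -/
def sieve (p : ℕ) : Bool := p != 1 && [2, 3, 5, 7, 11, 13, 17, 19, 23, 29, 31, 37, 41, 43].all
  fun r => p % r != 0 || p == r

/-- Reduction of the classification for the field with `q` elements to a test for the pairs
which are to be excluded. -/
def check (q : ℕ) (test : ℕ → Bool) : Bool :=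
  q % 4 != 1 || bounds.all fun k => Nat.blt k.2 q || (q - 1) % k.1 != 0 ||
    pairs.contains (q, (q - 1) / k.1 + 1) || test ((q - 1) / k.1 + 1)

/-- The test for the field with `p ^ d` elements. -/
def extensionTest (p d n : ℕ) : Bool := certificates.any fun c =>
  c.1 == p && c.2.1.length == d && c.2.2.1 == n &&
    CoeffList.negCheck p c.2.1 n c.2.2.2.1 c.2.2.2.2

theorem check_primes : ((List.range 2093).all fun p => !sieve p ||
    check p fun n => PrimeField.negCheck p n (PrimeField.sqrtNegOne p 50 2)) = true := by
  decide +kernel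

theorem check_extensions : ((List.range 46).all fun p => !sieve p ||
    [2, 3, 4, 5, 6].all fun d => Nat.blt 2092 (p ^ d) || check (p ^ d) (extensionTest p d)) =
      true := by
  decide +kernel

theorem pairs_covered : (pairs.all fun c => !sieve c.1 ||
    PrimeField.posCheck c.1 c.2 (PrimeField.sqrtNegOne c.1 50 2)) = true := by
  decide +kernel

/-- Data `(p, m, n, i)` for `CoeffList.posCheck`. -/
def extensionPairs : List (ℕ × List ℕ × ℕ × List ℕ) :=
  [(3, [1, 1], 3, [1, 1]), (3, [1, 1], 5, [1, 1]), (5, [2, 2], 9, [3, 0]),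
   (5, [2, 2], 13, [3, 0]), (7, [2, 2], 25, [4, 3]), (3, [1, 0, 0, 1], 41, [2, 0, 2, 2]),
   (5, [2, 0, 1], 63, [2, 0, 0])]

theorem extensionPairs_covered : (extensionPairs.all fun c =>
    CoeffList.posCheck c.1 c.2.1 c.2.2.1 c.2.2.2) = true := by
  decide +kernel

theorem sieve_eq_true {p : ℕ} (hp : p.Prime) : sieve p = true := by
  simp only [sieve, Bool.and_eq_true, bne_iff_ne, List.all_eq_true, Bool.or_eq_true, beq_iff_eq]
  refine ⟨hp.ne_one, fun r hr => or_iff_not_imp_left.2 fun h => ?_⟩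
  have hr1 : r ≠ 1 := by rintro rfl; simp at hr
  exact ((hp.eq_one_or_self_of_dvd r (Nat.dvd_of_mod_eq_zero (not_not.1 h))).resolve_left hr1).symm

variable {F : Type*} [Field F] [Fintype F]

theorem isCovered_of_prime {q n : ℕ} (hF : Fintype.card F = q) (hq : q.Prime)
    (h : (q, n) ∈ pairs) : IsCovered F n := by
  have : Fact q.Prime := ⟨hq⟩
  have : CharP F q := charP_of_card_eq_prime hF
  have h := List.all_eq_true.1 pairs_covered _ h
  rw [sieve_eq_true hq] at h
  exact PrimeField.isCovered_of_posCheck hq.one_lt hF h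

theorem isCovered_of_extension {p n : ℕ} (hp : p.Prime) {m i : List ℕ}
    (hF : Fintype.card F = p ^ m.length) (hm : m ≠ []) (hq : p ^ m.length < 4096) (hn : n ≠ 0)
    (hn' : n < 4096) (h : (p, m, n, i) ∈ extensionPairs) : IsCovered F n := by
  have : Fact p.Prime := ⟨hp⟩
  have : CharP F p := charP_of_card_eq_prime_pow hF
  have h := List.all_eq_true.1 extensionPairs_covered _ h
  exact CoeffList.isCovered_of_posCheck hm hF hq hn' hn h

theorem isCovered_of_mem_pairs {q n : ℕ} (hF : Fintype.card F = q) (h : (q, n) ∈ pairs) :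
    IsCovered F n := by
  by_cases hq : q.Prime
  · exact isCovered_of_prime hF hq h
  have : ∃ c ∈ extensionPairs, c.2.2.1 = n ∧ q = c.1 ^ c.2.1.length := by
    revert h hq
    clear hF
    simp only [pairs, List.mem_cons, Prod.mk.injEq, List.not_mem_nil, or_false]
    rintro h hq
    rcases h with h | h | h | h | h | h | h | h | h | h | h | h | h | h | h | h | h | h <;>
    obtain ⟨rfl, rfl⟩ := h <;> first | decide | norm_num at hq
  obtain ⟨⟨p, m, n, i⟩, hc, rfl, rfl⟩ := this
  have hall : ∀ c ∈ extensionPairs, c.1.Prime ∧ c.2.1 ≠ [] ∧ c.1 ^ c.2.1.length < 4096 ∧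
      c.2.2.1 ≠ 0 ∧ c.2.2.1 < 4096 := by
    simp [extensionPairs, Nat.prime_three, Nat.prime_five]
    norm_num
  obtain ⟨h1, h2, h3, h4, h5⟩ := hall _ hc
  exact isCovered_of_extension h1 hF h2 h3 h4 h5 hc

theorem check_eq_true {p d : ℕ} (hp : p.Prime) (hd : 2 ≤ d) (hq : p ^ d ≤ 2092) :
    check (p ^ d) (extensionTest p d) = true := by
  have hp46 : p < 46 := by
    by_contra! h
    have := (Nat.pow_le_pow_left h 2).trans (Nat.pow_le_pow_right hp.pos hd)
    omega
  by_cases h2 : p = 2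
  · subst h2
    have : 2 ∣ 2 ^ d := dvd_pow_self 2 (by omega)
    rw [check, Bool.or_eq_true]
    left
    rw [bne_iff_ne]; omega
  have hd7 : d < 7 := by
    by_contra! h
    have : 3 ≤ p := by have := hp.two_le; omega
    have := (Nat.pow_le_pow_left this 7).trans (Nat.pow_le_pow_right hp.pos h)
    omega
  have h := List.all_eq_true.1 check_extensions _ (List.mem_range.2 hp46)
  rw [sieve_eq_true hp] at h
  have h := List.all_eq_true.1 h d (by interval_cases d <;> simp)
  have hb : Nat.blt 2092 (p ^ d) = false := by
    rw [Bool.eq_false_iff]; intro h; rw [Nat.blt_eq] at h; omega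
  simpa [hb] using h

theorem mem_of_check {q k b n : ℕ} {test : ℕ → Bool} (h : check q test = true)
    (hq4 : q % 4 = 1) (hkb : (k, b) ∈ bounds) (hqb : q ≤ b) (hk : k ∣ q - 1)
    (hn : n = (q - 1) / k + 1) (htest : test n = false) : (q, n) ∈ pairs := by
  rw [check, hq4] at h
  have h := List.all_eq_true.1 h _ hkb
  have hb : Nat.blt b q = false := by
    rw [Bool.eq_false_iff]; intro h; rw [Nat.blt_eq] at h; omega
  simpa [hb, Nat.mod_eq_zero_of_dvd hk, ← hn, htest] using h

theorem mem_pairs_of_isCovered {q k b n : ℕ} (hF : Fintype.card F = q)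
    (hq4 : q % 4 = 1) (hkb : (k, b) ∈ bounds) (hqb : q ≤ b) (hk : k ∣ q - 1)
    (hn : n = (q - 1) / k + 1) (h : IsCovered F n) : (q, n) ∈ pairs := by
  have hb : b ≤ 2092 := by simp [bounds] at hkb; omega
  obtain ⟨p, hpF⟩ := CharP.exists F
  obtain ⟨d, hp, hcard⟩ := FiniteField.card F p
  have : Fact p.Prime := ⟨hp⟩
  have hd0 := d.pos
  generalize (d : ℕ) = d at hcard hd0
  have hqpd : q = p ^ d := hF.symm.trans hcard
  rcases Nat.lt_or_ge d 2 with hd | hd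
  · obtain rfl : d = 1 := by omega
    rw [pow_one] at hqpd
    have hp2093 : p < 2093 := by omega
    have hc := List.all_eq_true.1 check_primes _ (List.mem_range.2 hp2093)
    rw [sieve_eq_true hp] at hc
    subst hqpd
    refine mem_of_check (by simpa using hc) hq4 hkb hqb hk hn ?_
    rw [Bool.eq_false_iff]
    exact fun ht => PrimeField.not_isCovered_of_negCheck hp.one_lt ht h
  · subst hqpd
    refine mem_of_check (check_eq_true hp hd (by omega)) hq4 hkb hqb hk hn ?_
    rw [Bool.eq_false_iff]
    intro ht
    obtain ⟨⟨p', m, n', i, γ⟩, -, hc⟩ := List.any_eq_true.1 ht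
    simp only [Bool.and_eq_true, beq_iff_eq] at hc
    obtain ⟨⟨⟨rfl, rfl⟩, rfl⟩, hc⟩ := hc
    refine CoeffList.not_isCovered_of_negCheck (by rintro rfl; simp at hd) hF (by omega) ?_ hc h
    have := Nat.div_le_self (p' ^ m.length - 1) k
    omega

end SmallFields

namespace QuadSum

open Finset HasseCubic

variable {F : Type*} [Field F] [Fintype F] [DecidableEq F]

local notation "χ" => quadraticChar F

omit [Field F] [DecidableEq F] in
theorem sum_prod_one_sub {ι : Type*} (s : Finset ι) (f : ι → F → ℤ) :
    ∑ x, ∏ c ∈ s, (1 - f c x) =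
      ∑ j ∈ range (#s + 1), (-1) ^ j * ∑ t ∈ powersetCard j s, ∑ x, ∏ c ∈ t, f c x := by
  simp only [sub_eq_add_neg, prod_one_add, prod_neg]
  rw [sum_comm, sum_powerset]
  refine sum_congr rfl fun j _ => ?_
  rw [mul_sum]
  refine sum_congr rfl fun t ht => ?_
  rw [(mem_powersetCard.1 ht).2, mul_sum]

theorem abs_triple_le (hF : ringChar F ≠ 2) {a b c : F} (hab : a ≠ b) (hac : a ≠ c)
    (hbc : b ≠ c) :
    |∑ x, χ ((x - a) * (x - b) * (x - c))| ≤ hasseBound (Fintype.card F) := by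
  have hd : disc (-(a + b + c)) (a * b + b * c + c * a) (-(a * b * c)) ≠ 0 := by
    have : disc (-(a + b + c)) (a * b + b * c + c * a) (-(a * b * c)) =
        ((a - b) * (a - c) * (b - c)) ^ 2 := by unfold disc; ring
    rw [this]
    exact pow_ne_zero 2 (mul_ne_zero (mul_ne_zero (sub_ne_zero.2 hab) (sub_ne_zero.2 hac))
      (sub_ne_zero.2 hbc))
  convert abs_cubic_le hF hd using 2
  refine sum_congr rfl fun x _ => ?_
  congr 1; ring

theorem abs_quadruple_le (hF : ringChar F ≠ 2) {a b c d : F} (hab : a ≠ b) (hac : a ≠ c)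
    (hbc : b ≠ c) (hda : d ≠ a) (hdb : d ≠ b) (hdc : d ≠ c) :
    |∑ x, χ ((x - d) * ((x - a) * (x - b) * (x - c)))| ≤ hasseBound (Fintype.card F) + 1 := by
  have hd : disc (-(a + b + c)) (a * b + b * c + c * a) (-(a * b * c)) ≠ 0 := by
    have : disc (-(a + b + c)) (a * b + b * c + c * a) (-(a * b * c)) =
        ((a - b) * (a - c) * (b - c)) ^ 2 := by unfold disc; ring
    rw [this]
    exact pow_ne_zero 2 (mul_ne_zero (mul_ne_zero (sub_ne_zero.2 hab) (sub_ne_zero.2 hac))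
      (sub_ne_zero.2 hbc))
  have hs : d ^ 3 + -(a + b + c) * d ^ 2 + (a * b + b * c + c * a) * d + -(a * b * c) ≠ 0 := by
    have := mul_ne_zero (mul_ne_zero (sub_ne_zero.2 hda) (sub_ne_zero.2 hdb)) (sub_ne_zero.2 hdc)
    convert this using 1
    ring
  convert abs_quartic_le hF hd hs using 2
  refine sum_congr rfl fun x _ => ?_
  congr 1; ring

theorem abs_prod_le (hF : ringChar F ≠ 2) (t : Finset F) :
    (#t = 1 → ∑ x, ∏ c ∈ t, χ (x - c) = 0) ∧ (#t = 2 → ∑ x, ∏ c ∈ t, χ (x - c) = -1) ∧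
    (#t = 3 → |∑ x, ∏ c ∈ t, χ (x - c)| ≤ hasseBound (Fintype.card F)) ∧
    (#t = 4 → |∑ x, ∏ c ∈ t, χ (x - c)| ≤ hasseBound (Fintype.card F) + 1) := by
  simp only [← map_prod]
  refine ⟨fun h => ?_, fun h => ?_, fun h => ?_, fun h => ?_⟩
  · obtain ⟨a, rfl⟩ := card_eq_one.1 h
    simp only [prod_singleton]
    rw [sum_comp_sub χ, sum_char hF]
  · obtain ⟨a, b, hab, rfl⟩ := card_eq_two.1 h
    simp only [prod_pair hab]
    exact sum_pair hF hab
  · obtain ⟨a, b, c, hab, hac, hbc, rfl⟩ := card_eq_three.1 h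
    convert abs_triple_le hF hab hac hbc using 4
    rw [prod_insert (by simp [hab, hac]), prod_pair hbc]
    ring
  · obtain ⟨d, t, hd, rfl, ht⟩ := card_eq_succ.1 h
    obtain ⟨a, b, c, hab, hac, hbc, rfl⟩ := card_eq_three.1 ht
    simp only [mem_insert, mem_singleton, not_or] at hd
    convert abs_quadruple_le hF hab hac hbc hd.1 hd.2.1 hd.2.2 using 4
    rw [prod_insert (by simp [hd]), prod_insert (by simp [hab, hac]), prod_pair hbc]
    ring

omit [Field F] [Fintype F] [DecidableEq F] in
theorem abs_sum_powersetCard_le {s : Finset F} {j : ℕ} {W : Finset F → ℤ} {B : ℤ}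
    (h : ∀ t, #t = j → |W t| ≤ B) :
    |∑ t ∈ powersetCard j s, W t| ≤ (#s).choose j * B := by
  refine (abs_sum_le_sum_abs _ _).trans ?_
  rw [← card_powersetCard, ← nsmul_eq_mul]
  exact sum_le_card_nsmul _ _ _ fun t ht => h t (mem_powersetCard.1 ht).2

theorem le_sum_prod_one_sub (hF : ringChar F ≠ 2) {s : Finset F} (hs : #s = 5)
    (h5 : |∑ x, ∏ c ∈ s, χ (x - c)| ≤ 2 * hasseBound (Fintype.card F)) :
    (Fintype.card F : ℤ) - 17 * hasseBound (Fintype.card F) - 15 ≤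
      ∑ x, ∏ c ∈ s, (1 - χ (x - c)) := by
  rw [sum_prod_one_sub s fun c x => χ (x - c), hs]
  simp only [sum_range_succ, range_zero, sum_empty, zero_add]
  have h0 : ∑ t ∈ powersetCard 0 s, ∑ x, ∏ c ∈ t, χ (x - c) = Fintype.card F := by simp
  have h1 : ∑ t ∈ powersetCard 1 s, ∑ x, ∏ c ∈ t, χ (x - c) = 0 :=
    sum_eq_zero fun t ht => (abs_prod_le hF t).1 (mem_powersetCard.1 ht).2
  have h2 : ∑ t ∈ powersetCard 2 s, ∑ x, ∏ c ∈ t, χ (x - c) = -10 := by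
    rw [sum_congr rfl fun t ht => (abs_prod_le hF t).2.1 (mem_powersetCard.1 ht).2, sum_const,
      card_powersetCard, hs]
    rfl
  have h3 := abs_sum_powersetCard_le (s := s) fun t ht => (abs_prod_le hF t).2.2.1 ht
  have h4 := abs_sum_powersetCard_le (s := s) fun t ht => (abs_prod_le hF t).2.2.2 ht
  have h5' : ∑ t ∈ powersetCard 5 s, ∑ x, ∏ c ∈ t, χ (x - c) = ∑ x, ∏ c ∈ s, χ (x - c) := by
    rw [← hs, powersetCard_self, sum_singleton]
  rw [h0, h1, h2, h5']
  rw [hs, show Nat.choose 5 3 = 10 from rfl, abs_le] at h3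
  rw [hs, show Nat.choose 5 4 = 5 from rfl, abs_le] at h4
  rw [abs_le] at h5
  push_cast at h3 h4
  linarith [h3.2, h4.1, h5.2]

section FivePotents

omit [Fintype F] [DecidableEq F] in
theorem I_facts (h2 : (2 : F) ≠ 0) {I : F} (hI : I ^ 2 = -1) :
    I ≠ 0 ∧ I ≠ 1 ∧ I ≠ -1 ∧ I ≠ -I ∧ (1 : F) ≠ -1 := by
  refine ⟨?_, ?_, ?_, ?_, ?_⟩
  · rintro rfl; simp at hI
  · rintro rfl; exact h2 (by linear_combination hI)
  · rintro rfl; exact h2 (by linear_combination hI)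
  · intro h
    have : I ≠ 0 := by rintro rfl; simp at hI
    exact mul_ne_zero h2 this (by linear_combination h)
  · intro h; exact h2 (by linear_combination h)

/-- The set of `5`-potents of a field with a square root `I` of `-1`. -/
def fivePotents (I : F) : Finset F := {0, 1, -1, I, -I}

omit [Fintype F] in
theorem prod_fivePotents {M : Type*} [CommMonoid M] (h2 : (2 : F) ≠ 0) {I : F} (hI : I ^ 2 = -1)
    (g : F → M) : ∏ c ∈ fivePotents I, g c = g 0 * (g 1 * (g (-1) * (g I * g (-I)))) := by
  obtain ⟨h0, h1, h1', hII, h11⟩ := I_facts h2 hI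
  have h3 : -1 ≠ I := h1'.symm
  have h4 : (1 : F) ≠ -I := fun h => h1' (by rw [h, neg_neg])
  have h5 : -1 ≠ -I := fun h => h1 (neg_injective h).symm
  rw [fivePotents, prod_insert, prod_insert, prod_insert, prod_insert, prod_singleton] <;>
    simp [h0, h0.symm, h1.symm, h3, h4, h5, hII, h11]

omit [Fintype F] in
theorem card_fivePotents (h2 : (2 : F) ≠ 0) {I : F} (hI : I ^ 2 = -1) : #(fivePotents I) = 5 := by
  have := prod_fivePotents h2 hI fun _ => Multiplicative.ofAdd 1
  rw [prod_const] at this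
  have h := congrArg Multiplicative.toAdd this
  simpa using h

omit [Fintype F] in
theorem mem_fivePotents {I : F} (hI : I ^ 2 = -1) {a : F} : a ∈ fivePotents I ↔ a ^ 5 = a := by
  rw [pow_five_eq_self_iff hI]; simp [fivePotents]

theorem abs_quintic_le (hF : ringChar F ≠ 2) {I : F} (hI : I ^ 2 = -1) :
    |∑ x, χ (x ^ 5 - x)| ≤ 2 * hasseBound (Fintype.card F) := by
  have h2 : (2 : F) ≠ 0 := Ring.two_ne_zero hF
  have hI0 : I ≠ 0 := (I_facts h2 hI).1
  have e : ∀ x, χ (x ^ 5 - x) = χ x * χ ((x + I / x) ^ 2 - 2 * I) := by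
    intro x
    by_cases hx : x = 0
    · simp [hx]
    rw [← map_mul, ← char_mul_sq (x * ((x + I / x) ^ 2 - 2 * I)) hx]
    congr 1
    field_simp
    linear_combination -hI
  simp only [e]
  by_cases hsq : IsSquare I
  · obtain ⟨j, hj⟩ := hsq
    have hj0 : j ≠ 0 := by rintro rfl; simp at hj; exact hI0 hj
    rw [← pow_two] at hj
    have hd : ∀ j : F, j ^ 2 = I → disc (2 * j) (-2 * I) (-4 * I * j) ≠ 0 := by
      intro j hj
      have : disc (2 * j) (-2 * I) (-4 * I * j) = 2 ^ 5 * I ^ 3 := by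
        unfold disc; rw [← hj]; ring
      rw [this]
      exact mul_ne_zero (pow_ne_zero 5 h2) (pow_ne_zero 3 hI0)
    have h := sum_char_mul_add_div hF hj0 fun s => χ (s ^ 2 - 2 * I)
    rw [← hj] at h
    have e' : ∀ j : F, (∑ s, χ (s ^ 2 - 2 * I) * χ (s + 2 * j)) =
        ∑ s, χ (s ^ 3 + 2 * j * s ^ 2 + -2 * I * s + -4 * I * j) := by
      intro j
      refine sum_congr rfl fun s _ => ?_
      rw [← map_mul]
      congr 1; ring
    have h₁ := abs_le.1 (abs_cubic_le hF (hd j hj.symm))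
    have h₂ := abs_le.1 (abs_cubic_le hF (hd (-j) (by rw [neg_sq, ← hj])))
    have h₃ := e' (-j)
    rw [mul_neg 2 j] at h₂ h₃
    simp only [← sub_eq_add_neg (_ : F) (2 * j)] at h₃
    simp only [h, mul_add, sum_add_distrib, e', h₃]
    rw [abs_le]
    constructor <;> linarith [h₁.1, h₁.2, h₂.1, h₂.2]
  · have hχ : χ I = -1 := quadraticChar_neg_one_iff_not_isSquare.2 hsq
    have h : ∑ x, χ x * χ ((x + I / x) ^ 2 - 2 * I) =
        -∑ x, χ x * χ ((x + I / x) ^ 2 - 2 * I) := by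
      conv_lhs => rw [← sum_comp_mul _ hI0, ← sum_inv]
      rw [← sum_neg_distrib]
      refine sum_congr rfl fun x _ => ?_
      by_cases hx : x = 0
      · simp [hx]
      have : I * x⁻¹ + I / (I * x⁻¹) = x + I / x := by field_simp; ring
      rw [this, map_mul, hχ, ← char_mul_sq x⁻¹ hx, pow_two, inv_mul_cancel_left₀ hx]
      ring
    have h0 : ∑ x, χ x * χ ((x + I / x) ^ 2 - 2 * I) = 0 := by linarith
    rw [h0, hasseBound]
    simp

theorem char_eq_one_of_potent (hF : ringChar F ≠ 2) {b : F}
    (h : b ^ (Fintype.card F / 2 + 1) = b) : b = 0 ∨ χ b = 1 := by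
  by_cases hb : b = 0
  · exact Or.inl hb
  right
  rw [pow_succ] at h
  rw [quadraticChar_eq_pow_of_char_ne_two hF hb, if_pos]
  exact mul_right_cancel₀ hb (by rw [h, one_mul])

theorem card_le_of_isCovered (hF : ringChar F ≠ 2) {I : F} (hI : I ^ 2 = -1)
    (h : IsCovered F (Fintype.card F / 2 + 1)) : Fintype.card F ≤ 1237 := by
  have h2 : (2 : F) ≠ 0 := Ring.two_ne_zero hF
  have hprod : ∀ x, ∏ c ∈ fivePotents I, χ (x - c) = χ (x ^ 5 - x) := by
    intro x
    rw [← map_prod, prod_fivePotents h2 hI]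
    congr 1
    linear_combination (x - x ^ 3) * hI
  have hlow := le_sum_prod_one_sub hF (card_fivePotents h2 hI) (by
    simpa only [hprod] using abs_quintic_le hF hI)
  have hm1 : χ (-1) = 1 := by rw [← hI]; exact quadraticChar_sq_one' (I_facts h2 hI).1
  have hmem : ∀ a : F, a ^ 5 = a → a ∈ fivePotents I := fun a => (mem_fivePotents hI).2
  have hzero : ∀ x, x ≠ I ∧ x ≠ -I → ∏ c ∈ fivePotents I, (1 - χ (x - c)) = 0 := by
    intro x hx
    obtain ⟨a, b, ha, hb, rfl⟩ := h x
    have hvanish : ∀ c ∈ fivePotents I, χ (a + b - c) = 1 →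
        ∏ c ∈ fivePotents I, (1 - χ (a + b - c)) = 0 :=
      fun c hc h => prod_eq_zero hc (by rw [h, sub_self])
    rcases char_eq_one_of_potent hF hb with rfl | hb
    · rw [add_zero] at *
      have := (pow_five_eq_self_iff hI).1 ha
      simp only [List.mem_cons, List.not_mem_nil, or_false, hx.1, hx.2] at this
      rcases this with rfl | rfl | rfl
      · exact hvanish (-1) (hmem _ (by norm_num)) (by simp)
      · exact hvanish 0 (hmem _ (by norm_num)) (by simp)
      · exact hvanish 0 (hmem _ (by norm_num)) (by simpa using hm1)
    · exact hvanish a (hmem a ha) (by rwa [add_sub_cancel_left])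
  have hbound : ∀ y, 0 ≤ 1 - χ y ∧ 1 - χ y ≤ 2 := by
    intro y
    by_cases hy : y = 0
    · simp [hy]
    · rcases quadraticChar_dichotomy hy with h | h <;> rw [h] <;> norm_num
  have hle : ∀ x ∈ fivePotents I, ∏ c ∈ fivePotents I, (1 - χ (x - c)) ≤ 16 := by
    intro x hx
    rw [← mul_prod_erase _ _ hx, sub_self, quadraticChar_zero, sub_zero, one_mul]
    refine (prod_le_prod (fun c _ => (hbound _).1) fun c _ => (hbound _).2).trans ?_
    rw [prod_const, card_erase_of_mem hx, card_fivePotents h2 hI]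
    norm_num
  have hup : ∑ x, ∏ c ∈ fivePotents I, (1 - χ (x - c)) ≤ 32 := by
    rw [← sum_subset (subset_univ {I, -I}) fun x _ hx => hzero x (by simpa using hx),
      Finset.sum_pair (I_facts h2 hI).2.2.2.1]
    have hI5 : I ^ 5 = I := by linear_combination (I ^ 3 - I) * hI
    linarith [hle I (hmem _ hI5), hle (-I) (hmem _ (by rw [Odd.neg_pow (by decide), hI5]))]
  have hL := Nat.sqrt_le' (4 * Fintype.card F + 1)
  have hL' : hasseBound (Fintype.card F) ^ 2 ≤ 4 * (Fintype.card F : ℤ) + 1 := by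
    unfold hasseBound; exact_mod_cast hL
  have : hasseBound (Fintype.card F) ≤ 70 := by nlinarith
  zify
  linarith

theorem card_le_of_isCovered' (hF : ringChar F ≠ 2) (hm1 : χ (-1) = -1)
    (hI : ∀ a : F, a ^ 5 = a → a = 0 ∨ a = 1 ∨ a = -1)
    (h : IsCovered F (Fintype.card F / 2 + 1)) : Fintype.card F ≤ 7 := by
  have h2 : (2 : F) ≠ 0 := Ring.two_ne_zero hF
  have h11 : (1 : F) ≠ -1 := fun h => h2 (by linear_combination h)
  have hodd : ∑ x, χ ((x - 0) * ((x - 1) * (x - -1))) = 0 := by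
    have e : ∑ x, χ ((x - 0) * ((x - 1) * (x - -1))) =
        -∑ x, χ ((x - 0) * ((x - 1) * (x - -1))) := by
      conv_lhs => rw [← sum_comp_mul _ (neg_ne_zero.2 one_ne_zero : (-1 : F) ≠ 0)]
      rw [← sum_neg_distrib]
      refine sum_congr rfl fun x _ => ?_
      have : (-1 * x - 0) * ((-1 * x - 1) * (-1 * x - -1)) =
        -1 * ((x - 0) * ((x - 1) * (x - -1))) := by ring
      rw [this, map_mul, hm1]; ring
    linarith
  have hsum : ∑ x, (1 - χ (x - 0)) * ((1 - χ (x - 1)) * (1 - χ (x - -1))) =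
      (Fintype.card F : ℤ) - 3 := by
    have e : ∀ x, (1 - χ (x - 0)) * ((1 - χ (x - 1)) * (1 - χ (x - -1))) =
        1 - χ (x - 0) - χ (x - 1) - χ (x - -1) + χ ((x - 0) * (x - 1)) +
        χ ((x - 0) * (x - -1)) + χ ((x - 1) * (x - -1)) -
        χ ((x - 0) * ((x - 1) * (x - -1))) := by
      intro x
      simp only [map_mul]; ring
    simp only [e, sum_add_distrib, sum_sub_distrib, hodd, sum_comp_sub χ, sum_char hF]
    rw [QuadSum.sum_pair hF zero_ne_one, QuadSum.sum_pair hF (neg_ne_zero.2 one_ne_zero).symm,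
      QuadSum.sum_pair hF h11]
    simp
    ring
  have hbound : ∀ y, 0 ≤ 1 - χ y ∧ 1 - χ y ≤ 2 := by
    intro y
    by_cases hy : y = 0
    · simp [hy]
    · rcases quadraticChar_dichotomy hy with h | h <;> rw [h] <;> norm_num
  have hzero : ∀ x, x ≠ -1 → (1 - χ (x - 0)) * ((1 - χ (x - 1)) * (1 - χ (x - -1))) = 0 := by
    intro x hx
    obtain ⟨a, b, ha, hb, rfl⟩ := h x
    rcases char_eq_one_of_potent hF hb with rfl | hb
    · rcases hI a ha with rfl | rfl | rfl
      · simp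
      · simp
      · simp at hx
    · rcases hI a ha with rfl | rfl | rfl <;> simp [hb]
  have hup : ∑ x, (1 - χ (x - 0)) * ((1 - χ (x - 1)) * (1 - χ (x - -1))) ≤ 4 := by
    rw [Fintype.sum_eq_single (-1) hzero, sub_self, quadraticChar_zero, sub_zero, sub_zero, hm1]
    linarith [(hbound (-1 - 1 : F)).2]
  zify
  linarith

end FivePotents

end QuadSum

/-! ### Cubic residue sums -/

namespace CubicSum

open Finset HasseCubic QuadSum

variable {F : Type*} [Field F] [Fintype F] [DecidableEq F]

local notation "χ" => quadraticChar F

/-- The sum of the two nontrivial cubic characters of a finite field `F` with `#F ≡ 1 mod 3`. -/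
def cubicRes (w : F) : ℤ := if w = 0 then 0 else if w ^ (Fintype.card F / 3) = 1 then 2 else -1

theorem cubicRes_zero : cubicRes (0 : F) = 0 := if_pos rfl

theorem cubicRes_one : cubicRes (1 : F) = 2 := by simp [cubicRes]

theorem cubicRes_dichotomy {w : F} (hw : w ≠ 0) : cubicRes w = 2 ∨ cubicRes w = -1 := by
  unfold cubicRes
  rw [if_neg hw]
  split_ifs <;> simp

omit [DecidableEq F] in
theorem pow_pow_three (h3 : Fintype.card F % 3 = 1) {w : F} (hw : w ≠ 0) :
    (w ^ (Fintype.card F / 3)) ^ 3 = 1 := by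
  rw [← pow_mul, ← FiniteField.pow_card_sub_one_eq_one w hw]
  congr 1
  omega

theorem cubicRes_mul_cube (h3 : Fintype.card F % 3 = 1) (x : F) {y : F} (hy : y ≠ 0) :
    cubicRes (x * y ^ 3) = cubicRes x := by
  unfold cubicRes
  rw [mul_pow, ← pow_mul, mul_comm 3, pow_mul, pow_pow_three h3 hy]
  simp [hy]

theorem cubicRes_cube (h3 : Fintype.card F % 3 = 1) {y : F} (hy : y ≠ 0) :
    cubicRes (y ^ 3) = 2 := by
  rw [← one_mul (y ^ 3), cubicRes_mul_cube h3 1 hy, cubicRes_one]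

theorem cubicRes_sq (h3 : Fintype.card F % 3 = 1) (x : F) : cubicRes (x ^ 2) = cubicRes x := by
  by_cases hx : x = 0
  · simp [hx]
  have h := pow_pow_three h3 hx
  unfold cubicRes
  rw [← pow_mul, mul_comm 2, pow_mul]
  generalize x ^ (Fintype.card F / 3) = a at h
  have : a ^ 2 = 1 ↔ a = 1 := ⟨fun h' => by linear_combination h - a * h', fun h' => by simp [h']⟩
  simp [hx, this]

theorem cubicRes_mul (h3 : Fintype.card F % 3 = 1) (u v : F) :
    cubicRes u * cubicRes v = cubicRes (u * v) + cubicRes (u * v ^ 2) := by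
  by_cases hu : u = 0
  · simp [hu, cubicRes_zero]
  by_cases hv : v = 0
  · simp [hv, cubicRes_zero]
  have h1 := pow_pow_three h3 hu
  have h2 := pow_pow_three h3 hv
  unfold cubicRes
  simp only [hu, hv, mul_eq_zero, pow_eq_zero_iff two_ne_zero, or_self, if_false, mul_pow,
    ← pow_mul, mul_comm 2]
  simp only [pow_mul]
  generalize u ^ (Fintype.card F / 3) = a at *
  generalize v ^ (Fintype.card F / 3) = b at *
  by_cases ha : a = 1
  · have : b ^ 2 = 1 ↔ b = 1 :=
      ⟨fun h' => by linear_combination h2 - b * h', fun h' => by simp [h']⟩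
    simp only [ha, one_mul, this, if_true]
    ring
  by_cases hb : b = 1
  · simp [hb, ha]
  have ha' : a ^ 2 + a + 1 = 0 :=
    (mul_eq_zero.1 (by linear_combination h1 : (a - 1) * (a ^ 2 + a + 1) = 0)).resolve_left
      (sub_ne_zero.2 ha)
  have hb' : b ^ 2 + b + 1 = 0 :=
    (mul_eq_zero.1 (by linear_combination h2 : (b - 1) * (b ^ 2 + b + 1) = 0)).resolve_left
      (sub_ne_zero.2 hb)
  have hab : (a - b) * (a - b ^ 2) = 0 := by linear_combination ha' - a * hb' + h2
  rcases mul_eq_zero.1 hab with h | h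
  · have e := sub_eq_zero.1 h
    have e1 : a * b ^ 2 = 1 := by rw [e]; linear_combination h2
    have e2 : a * b ≠ 1 := fun h => hb (by linear_combination e1 - b * h)
    simp [ha, hb, e1, e2]
  · have e := sub_eq_zero.1 h
    have e1 : a * b = 1 := by rw [e]; linear_combination h2
    have e2 : a * b ^ 2 ≠ 1 := fun h => hb (by linear_combination h - b * e1)
    simp [ha, hb, e1, e2]

theorem exists_cube_eq (h3 : Fintype.card F % 3 = 1) {w : F} (hw : w ^ (Fintype.card F / 3) = 1)
    (hw0 : w ≠ 0) : ∃ u, u ^ 3 = w := by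
  obtain ⟨g, hg⟩ := IsCyclic.exists_generator (α := Fˣ)
  obtain ⟨i, hi⟩ := Subgroup.mem_zpowers_iff.1 (hg (Units.mk0 w hw0))
  have ho : orderOf g = Fintype.card F - 1 := by
    rw [orderOf_eq_card_of_forall_mem_zpowers hg, Nat.card_eq_fintype_card, Fintype.card_units]
  have hm : 0 < Fintype.card F / 3 := by
    have := Fintype.one_lt_card (α := F)
    omega
  have h1 : g ^ (i * (Fintype.card F / 3 : ℕ)) = 1 := by
    rw [zpow_mul, hi, zpow_natCast]
    ext
    simpa using hw
  rw [← orderOf_dvd_iff_zpow_eq_one, ho] at h1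
  have h2 : ((Fintype.card F - 1 : ℕ) : ℤ) = 3 * (Fintype.card F / 3 : ℕ) := by omega
  rw [h2] at h1
  obtain ⟨k, hk⟩ := Int.dvd_of_mul_dvd_mul_right (by exact_mod_cast hm.ne') h1
  refine ⟨((g ^ k : Fˣ) : F), ?_⟩
  have := congrArg Units.val hi
  rw [Units.val_mk0] at this
  rw [← this, hk, mul_comm, zpow_mul]
  simp

theorem exists_omega (h3 : Fintype.card F % 3 = 1) : ∃ ω : F, ω ^ 2 + ω + 1 = 0 := by
  obtain ⟨g, hg⟩ := IsCyclic.exists_generator (α := Fˣ)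
  have ho : orderOf g = Fintype.card F - 1 := by
    rw [orderOf_eq_card_of_forall_mem_zpowers hg, Nat.card_eq_fintype_card, Fintype.card_units]
  have hm : 0 < Fintype.card F / 3 := by
    have := Fintype.one_lt_card (α := F)
    omega
  have h := pow_pow_three h3 g.ne_zero
  refine ⟨(g : F) ^ (Fintype.card F / 3), ?_⟩
  refine (mul_eq_zero.1 (by linear_combination h : ((g : F) ^ (Fintype.card F / 3) - 1) *
    (((g : F) ^ (Fintype.card F / 3)) ^ 2 + (g : F) ^ (Fintype.card F / 3) + 1) = 0)).resolve_left
      (sub_ne_zero.2 ?_)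
  intro h'
  have : g ^ (Fintype.card F / 3) = 1 := by ext; simpa using h'
  have := Nat.le_of_dvd hm (orderOf_dvd_of_pow_eq_one this)
  omega

omit [DecidableEq F] in
theorem three_ne_zero_of_card (h3 : Fintype.card F % 3 = 1) : (3 : F) ≠ 0 := by
  intro h
  have h1 : ((Fintype.card F : ℕ) : F) = 0 := FiniteField.cast_card_eq_zero F
  rw [show Fintype.card F = 3 * (Fintype.card F / 3) + 1 by omega] at h1
  push_cast at h1
  simp [h] at h1

theorem card_cube_roots (h3 : Fintype.card F % 3 = 1) (w : F) :
    (#{u : F | u ^ 3 = w} : ℤ) = 1 + cubicRes w := by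
  by_cases hw : w = 0
  · have : ({u : F | u ^ 3 = w} : Finset F) = {0} := by ext; simp [hw]
    rw [this, hw, cubicRes_zero]; simp
  by_cases hc : w ^ (Fintype.card F / 3) = 1
  · obtain ⟨v, rfl⟩ := exists_cube_eq h3 hc hw
    have hv : v ≠ 0 := by rintro rfl; simp at hw
    obtain ⟨ω, hω⟩ := exists_omega h3
    have h30 := three_ne_zero_of_card h3
    have h1 : ω ≠ 1 := by rintro rfl; exact h30 (by linear_combination hω)
    have h2 : ω ≠ 0 := by rintro rfl; simp at hω
    have : ({u : F | u ^ 3 = v ^ 3} : Finset F) = {v, ω * v, ω ^ 2 * v} := by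
      ext u
      simp only [mem_filter, mem_univ, true_and, mem_insert, mem_singleton]
      constructor
      · intro hu
        have : (u - v) * ((u - ω * v) * (u - ω ^ 2 * v)) = 0 := by
          linear_combination hu + (u * v ^ 2 * ω - u ^ 2 * v - v ^ 3 * (ω - 1)) * hω
        rcases mul_eq_zero.1 this with h | h
        · exact Or.inl (sub_eq_zero.1 h)
        rcases mul_eq_zero.1 h with h | h
        · exact Or.inr (Or.inl (sub_eq_zero.1 h))
        · exact Or.inr (Or.inr (sub_eq_zero.1 h))
      · rintro (rfl | rfl | rfl)
        · rfl
        · linear_combination (ω - 1) * v ^ 3 * hω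
        · linear_combination (ω - 1) * (ω ^ 3 + 1) * v ^ 3 * hω
    rw [this, cubicRes_cube h3 hv, card_insert_of_notMem, card_insert_of_notMem, card_singleton]
    · norm_num
    · simp only [mem_singleton, mul_eq_mul_right_iff, hv, or_false]
      intro h
      exact h1 (mul_left_cancel₀ h2 (by linear_combination -h))
    · simp only [mem_insert, mem_singleton, not_or]
      constructor
      · intro h
        exact h1 (mul_right_cancel₀ hv (by linear_combination -h))
      · intro h
        have h' : 1 = ω ^ 2 := mul_right_cancel₀ hv (by linear_combination h)
        exact h1 (by linear_combination (ω - 1) * hω + ω * h')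
  · have : ({u : F | u ^ 3 = w} : Finset F) = ∅ := by
      ext u
      simp only [mem_filter, mem_univ, true_and, notMem_empty, iff_false]
      rintro rfl
      have hu : u ≠ 0 := by rintro rfl; simp at hw
      apply hc
      rw [← pow_mul, mul_comm, pow_mul, pow_pow_three h3 hu]
    rw [this, cubicRes, if_neg hw, if_neg hc]; simp

theorem sum_cubicRes_mul (h3 : Fintype.card F % 3 = 1) (φ : F → ℤ) :
    ∑ w, cubicRes w * φ w = ∑ u, φ (u ^ 3) - ∑ w, φ w := by
  rw [sum_comp_eq (fun u => u ^ 3) φ univ]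
  rw [← sum_sub_distrib]
  refine sum_congr rfl fun w _ => ?_
  rw [card_cube_roots h3]
  ring

theorem sum_cubicRes (h3 : Fintype.card F % 3 = 1) : ∑ w : F, cubicRes w = 0 := by
  simpa using sum_cubicRes_mul (F := F) h3 fun _ => 1

end CubicSum

namespace CubicSum

open Finset HasseCubic QuadSum

variable {F : Type*} [Field F] [Fintype F] [DecidableEq F]

local notation "χ" => quadraticChar F

local notation "L" => hasseBound (Fintype.card F)

theorem sum_cubicRes_linear (h3 : Fintype.card F % 3 = 1) {k : F} (hk : k ≠ 0) (c : F) :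
    ∑ x, cubicRes (k * x + c) = 0 := by
  rw [sum_comp_mul (fun x => cubicRes (x + c)) hk, ← sum_cubicRes h3, ← sum_comp_sub cubicRes (-c)]
  simp only [sub_neg_eq_add]

theorem abs_sum_cubicRes_quadratic (hF : ringChar F ≠ 2) (h3 : Fintype.card F % 3 = 1)
    {k a b : F} (hk : k ≠ 0) (hab : a ≠ b) :
    |∑ x, cubicRes (k * ((x - a) * (x - b)))| ≤ L := by
  have h2 : (2 : F) ≠ 0 := Ring.two_ne_zero hF
  have h30 := three_ne_zero_of_card h3
  have e : ∑ x, cubicRes (k * ((x - a) * (x - b))) =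
      ∑ u, χ (4 / k * u ^ 3 + 0 * u ^ 2 + 0 * u + (a - b) ^ 2) := by
    have h4k : 4 / k ≠ 0 := div_ne_zero (by rw [show (4 : F) = 2 ^ 2 by norm_num]; simp [h2]) hk
    have h := sum_cubicRes_mul h3 fun w => χ (4 / k * w + (a - b) ^ 2)
    rw [sum_linear hF h4k, sub_zero] at h
    simp only [zero_mul, add_zero]
    rw [← h, sum_comp_eq (fun x => k * ((x - a) * (x - b)))]
    have e' : ∀ y, (#{x | k * ((x - a) * (x - b)) = y} : ℤ) =
        1 + χ (4 / k * y + (a - b) ^ 2) := by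
      intro y
      rw [show 4 / k * y + (a - b) ^ 2 = (a + b) ^ 2 - 4 * (a * b - y / k) by ring,
        ← card_quadratic hF]
      congr 2
      ext x
      simp only [mem_filter, mem_univ, true_and]
      constructor
      · rintro rfl; field_simp; ring
      · intro h; field_simp at h; linear_combination h
    simp only [e', mul_add, mul_one, sum_add_distrib, sum_cubicRes h3, zero_add]
  rw [e]
  refine abs_cubic_le' hF (div_ne_zero (by rw [show (4 : F) = 2 ^ 2 by norm_num]; simp [h2]) hk) ?_
  have : (27 : F) * (4 / k) ^ 2 * ((a - b) ^ 2) ^ 2 ≠ 0 := by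
    rw [show (27 : F) = 3 ^ 3 by norm_num, show (4 : F) = 2 ^ 2 by norm_num]
    simp [h2, h30, hk, sub_ne_zero.2 hab]
  convert neg_ne_zero.2 this using 1
  ring

theorem sum_cubicRes_mul_sq (h3 : Fintype.card F % 3 = 1) {a b : F} (hab : a ≠ b) :
    ∑ x, cubicRes ((x - a) * (x - b) ^ 2) = -2 := by
  rw [sum_shift_inv _ a]
  have h := sum_cubicRes_linear h3 (sub_ne_zero.2 hab) 1
  rw [← add_sum_erase _ _ (mem_univ (0 : F))] at h
  have e : ∑ v ∈ univ.erase 0, cubicRes ((a + v⁻¹ - a) * (a + v⁻¹ - b) ^ 2) =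
      ∑ v ∈ univ.erase 0, cubicRes ((a - b) * v + 1) := by
    refine sum_congr rfl fun v hv => ?_
    have hv : v ≠ 0 := ne_of_mem_erase hv
    rw [← cubicRes_mul_cube h3 _ hv, ← cubicRes_sq h3 ((a - b) * v + 1)]
    congr 1
    field_simp
    ring
  rw [e]
  simp only [sub_self, zero_mul, cubicRes_zero, mul_zero, zero_add, cubicRes_one] at h ⊢
  linarith

theorem abs_sum_cubicRes_triple (hF : ringChar F ≠ 2) (h3 : Fintype.card F % 3 = 1)
    {a b c : F} (hab : a ≠ b) (hac : a ≠ c) (hbc : b ≠ c) :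
    |∑ x, cubicRes ((x - a) * (x - b) * (x - c))| ≤ L + 2 := by
  have hb := sub_ne_zero.2 hab
  have hc := sub_ne_zero.2 hac
  have h := abs_sum_cubicRes_quadratic hF h3 (mul_ne_zero hb hc) (a := -(a - b)⁻¹)
    (b := -(a - c)⁻¹) (by
      intro h
      exact hbc (by linear_combination - inv_injective (neg_injective h)))
  rw [← add_sum_erase _ _ (mem_univ (0 : F))] at h
  rw [sum_shift_inv _ a]
  have e : ∑ v ∈ univ.erase 0, cubicRes ((a + v⁻¹ - a) * (a + v⁻¹ - b) * (a + v⁻¹ - c)) =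
      ∑ v ∈ univ.erase 0, cubicRes ((a - b) * (a - c) * ((v - -(a - b)⁻¹) * (v - -(a - c)⁻¹))) := by
    refine sum_congr rfl fun v hv => ?_
    have hv : v ≠ 0 := ne_of_mem_erase hv
    rw [← cubicRes_mul_cube h3 _ hv]
    congr 1
    field_simp
    ring
  have e0 : (a - b) * (a - c) * ((0 - -(a - b)⁻¹) * (0 - -(a - c)⁻¹)) = 1 := by
    field_simp; ring
  rw [e0, cubicRes_one] at h
  rw [e]
  simp only [sub_self, zero_mul, cubicRes_zero, zero_add]
  rw [abs_le] at *
  constructor <;> linarith [h.1, h.2]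

theorem abs_sum_sextic (hF : ringChar F ≠ 2) (h30 : (3 : F) ≠ 0) {A : F} (h1 : A ≠ 2)
    (h1' : A ≠ -2) : |∑ u, χ (u ^ 6 + A * u ^ 3 + 1)| ≤ 2 * L + 3 := by
  have h := sum_char_mul_add_div hF one_ne_zero fun s => χ (s ^ 3 - 3 * s + A)
  have e : ∑ u, χ (u ^ 6 + A * u ^ 3 + 1) =
      1 + ∑ x, χ x * χ ((x + 1 ^ 2 / x) ^ 3 - 3 * (x + 1 ^ 2 / x) + A) := by
    rw [← add_sum_erase _ _ (mem_univ (0 : F)),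
      ← add_sum_erase _ (fun x => χ x * χ ((x + 1 ^ 2 / x) ^ 3 - 3 * (x + 1 ^ 2 / x) + A))
        (mem_univ (0 : F))]
    simp only [quadraticChar_zero, zero_mul, zero_add]
    congr 1
    · simp
    · refine sum_congr rfl fun x hx => ?_
      have hx : x ≠ 0 := ne_of_mem_erase hx
      rw [← map_mul, ← char_mul_sq (x * _) hx]
      congr 1
      field_simp
      ring
  have hd : disc 0 (-3) A ≠ 0 := by
    have : disc 0 (-3) A = 3 ^ 3 * ((2 - A) * (A - -2)) := by unfold disc; ring
    rw [this]
    exact mul_ne_zero (pow_ne_zero 3 h30) (mul_ne_zero (sub_ne_zero.2 h1.symm)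
      (sub_ne_zero.2 h1'))
  have q1 := abs_quartic_le hF hd (s := -2) (by
    convert sub_ne_zero.2 h1 using 1; ring)
  have q2 := abs_quartic_le hF hd (s := 2) (by
    convert sub_ne_zero.2 h1' using 1; ring)
  have e1 : ∑ s, χ (s ^ 3 - 3 * s + A) * (χ (s + 2 * 1) + χ (s - 2 * 1)) =
      ∑ x, χ ((x - -2) * (x ^ 3 + 0 * x ^ 2 + -3 * x + A)) +
      ∑ x, χ ((x - 2) * (x ^ 3 + 0 * x ^ 2 + -3 * x + A)) := by
    rw [← sum_add_distrib]
    refine sum_congr rfl fun x _ => ?_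
    rw [mul_add, ← map_mul, ← map_mul]
    congr 2 <;> ring
  rw [e, h, e1]
  rw [abs_le] at *
  constructor <;> linarith [q1.1, q1.2, q2.1, q2.2]

theorem sum_quadratic (hF : ringChar F ≠ 2) {A : F} (h1 : A ≠ 2) (h1' : A ≠ -2) :
    ∑ w, χ (w ^ 2 + A * w + 1) = -1 := by
  have h2 : (2 : F) ≠ 0 := Ring.two_ne_zero hF
  have hD : 0 ≠ (A ^ 2 - 4) / 4 := by
    have : A ^ 2 - 4 = (A - 2) * (A - -2) := by ring
    rw [this, show (4 : F) = 2 ^ 2 by norm_num]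
    exact (div_ne_zero (mul_ne_zero (sub_ne_zero.2 h1) (sub_ne_zero.2 h1'))
      (pow_ne_zero 2 h2)).symm
  have e : ∀ y : F, (#{x | x ^ 2 = y} : ℤ) = 1 + χ y := by
    intro y
    have h := card_quadratic hF 0 (-y)
    rw [show (0 : F) ^ 2 - 4 * -y = y * 2 ^ 2 by ring, char_mul_sq _ h2] at h
    rw [← h]
    congr 2
    ext x
    simp only [mem_filter, mem_univ, true_and]
    constructor <;> intro h <;> linear_combination h
  have h := sum_comp_eq (fun x : F => x ^ 2) (fun y => χ (y - (A ^ 2 - 4) / 4)) univ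
  simp only [e, mul_add, mul_one, sum_add_distrib, sum_comp_sub χ, sum_char hF, zero_add] at h
  rw [← sum_comp_sub _ (A / 2)]
  rw [← QuadSum.sum_pair hF hD]
  simp only [map_mul, sub_zero, mul_comm (χ _) (χ (_ - _))]
  rw [← h]
  refine sum_congr rfl fun x _ => ?_
  congr 1
  rw [show (4 : F) = 2 ^ 2 by norm_num]
  field_simp
  ring

theorem abs_sum_cubicRes_mul_char (hF : ringChar F ≠ 2) (h3 : Fintype.card F % 3 = 1)
    {A : F} (h1 : A ≠ 2) (h1' : A ≠ -2) :
    |∑ w, cubicRes w * χ (w ^ 2 + A * w + 1)| ≤ 2 * L + 4 := by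
  have h := abs_sum_sextic hF (three_ne_zero_of_card h3) h1 h1'
  have h' := sum_cubicRes_mul h3 fun w => χ (w ^ 2 + A * w + 1)
  simp only [← pow_mul] at h'
  norm_num only at h'
  rw [h', sum_quadratic hF h1 h1']
  rw [abs_le] at *
  constructor <;> linarith [h.1, h.2]

theorem abs_sum_cubicRes_scaled_mul_char (hF : ringChar F ≠ 2) (h3 : Fintype.card F % 3 = 1)
    {A k : F} (hk : k ≠ 0) (h1 : A ≠ 2) (h1' : A ≠ -2) :
    |∑ w, cubicRes (k * w) * χ (w ^ 2 + A * w + 1)| ≤ 2 * L + 4 := by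
  have h := abs_sum_cubicRes_mul_char hF h3 h1 h1'
  have e : cubicRes k * ∑ w, cubicRes w * χ (w ^ 2 + A * w + 1) =
      2 * ∑ w, cubicRes (k * w) * χ (w ^ 2 + A * w + 1) := by
    simp only [mul_sum, ← mul_assoc, cubicRes_mul h3, add_mul, sum_add_distrib]
    have : ∑ w, cubicRes (k * w ^ 2) * χ (w ^ 2 + A * w + 1) =
        ∑ w, cubicRes (k * w) * χ (w ^ 2 + A * w + 1) := by
      rw [← sum_inv]
      refine sum_congr rfl fun w _ => ?_
      by_cases hw : w = 0
      · simp [hw, cubicRes_zero]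
      congr 1
      · rw [← cubicRes_mul_cube h3 _ hw]
        congr 1
        field_simp
      · rw [← char_mul_sq _ hw]
        congr 1
        field_simp
        ring
    rw [this, ← sum_add_distrib]
    simp only [two_mul, add_mul]
  rw [abs_le] at *
  rcases cubicRes_dichotomy hk with hk | hk <;> rw [hk] at e <;>
    constructor <;> linarith [h.1, h.2]

theorem abs_sum_cubicRes_mixed (hF : ringChar F ≠ 2) (h3 : Fintype.card F % 3 = 1)
    {a b c : F} (hab : a ≠ b) (hac : a ≠ c) (hbc : b ≠ c) :
    |∑ x, cubicRes ((x - a) * (x - b) * (x - c) ^ 2)| ≤ 2 * L + 4 := by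
  have h2 : (2 : F) ≠ 0 := Ring.two_ne_zero hF
  have hk := sub_ne_zero.2 hab
  have ha := sub_ne_zero.2 hac
  have hb := sub_ne_zero.2 hbc
  have h22 : (2 : F) ^ 2 ≠ 0 := pow_ne_zero 2 h2
  have h1 : 4 * ((a - c) / (a - b)) - 2 ≠ 2 := by
    intro h
    field_simp at h
    refine mul_ne_zero h22 hb ?_
    linear_combination h
  have h1' : 4 * ((a - c) / (a - b)) - 2 ≠ -2 := by
    intro h
    field_simp at h
    refine mul_ne_zero h22 ha ?_
    linear_combination h
  have h := abs_sum_cubicRes_scaled_mul_char hF h3 hk h1 h1'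
  convert h using 2
  have hs : ∑ x, cubicRes ((x - a) * (x - b) * (x - c) ^ 2) =
      ∑ y ∈ univ.erase 0, cubicRes ((a - b) *
        ((y - (a - c) / (a - b)) * (y - (b - c) / (a - b)) / y)) := by
    rw [← sum_comp_sub _ (-c), ← sum_comp_mul _ hk, ← add_sum_erase _ _ (mem_univ (0 : F))]
    have e0 : ((a - b) * 0 - -c - a) * ((a - b) * 0 - -c - b) * ((a - b) * 0 - -c - c) ^ 2 = 0 := by
      ring
    rw [e0, cubicRes_zero, zero_add]
    refine sum_congr rfl fun y hy => ?_
    have hy : y ≠ 0 := ne_of_mem_erase hy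
    rw [← cubicRes_mul_cube h3 ((a - b) * _) (mul_ne_zero hk hy)]
    congr 1
    field_simp
    ring
  rw [hs, sum_comp_eq (fun y => (y - (a - c) / (a - b)) * (y - (b - c) / (a - b)) / y)
    (fun w => cubicRes ((a - b) * w))]
  have e' : ∀ w, (#{y ∈ univ.erase 0 |
      (y - (a - c) / (a - b)) * (y - (b - c) / (a - b)) / y = w} : ℤ) =
      1 + χ (w ^ 2 + (4 * ((a - c) / (a - b)) - 2) * w + 1) := by
    intro w
    have hc := card_quadratic hF ((a - c) / (a - b) + (b - c) / (a - b) + w)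
      ((a - c) / (a - b) * ((b - c) / (a - b)))
    have : ((a - c) / (a - b) + (b - c) / (a - b) + w) ^ 2 -
        4 * ((a - c) / (a - b) * ((b - c) / (a - b))) =
        w ^ 2 + (4 * ((a - c) / (a - b)) - 2) * w + 1 := by
      field_simp; ring
    rw [← this, ← hc]
    congr 2
    ext y
    simp only [mem_filter, mem_erase, mem_univ, and_true, true_and]
    have hne : (a - c) / (a - b) * ((b - c) / (a - b)) ≠ 0 :=
      mul_ne_zero (div_ne_zero ha hk) (div_ne_zero hb hk)
    generalize (a - c) / (a - b) = s at hne
    generalize (b - c) / (a - b) = t at hne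
    constructor
    · rintro ⟨hy, rfl⟩
      field_simp
      ring
    · intro h
      have hy : y ≠ 0 := by rintro rfl; exact hne (by linear_combination h)
      refine ⟨hy, ?_⟩
      field_simp
      linear_combination h
  simp only [e', mul_add, mul_one, sum_add_distrib]
  have := sum_cubicRes_linear h3 hk 0
  simp only [add_zero] at this
  rw [this, zero_add]

theorem neg_sum_pair_le (hF : ringChar F ≠ 2) (h3 : Fintype.card F % 3 = 1) {a b : F}
    (hab : a ≠ b) : -∑ x, cubicRes (x - a) * cubicRes (x - b) ≤ L + 2 := by
  simp only [cubicRes_mul h3, sum_add_distrib, sum_cubicRes_mul_sq h3 hab]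
  have h := abs_sum_cubicRes_quadratic hF h3 one_ne_zero hab
  simp only [one_mul] at h
  linarith [(abs_le.1 h).1]

theorem sum_triple_le (hF : ringChar F ≠ 2) (h3 : Fintype.card F % 3 = 1) {a b c : F}
    (hab : a ≠ b) (hac : a ≠ c) (hbc : b ≠ c) :
    ∑ x, cubicRes (x - a) * cubicRes (x - b) * cubicRes (x - c) ≤ 7 * L + 14 := by
  have e : ∀ u v w : F, cubicRes u * cubicRes v * cubicRes w = cubicRes (u * v * w) +
      cubicRes (u * v * w ^ 2) + cubicRes (u * w * v ^ 2) + cubicRes (v * w * u ^ 2) := by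
    intro u v w
    simp only [cubicRes_mul h3, add_mul]
    have : cubicRes (u * v ^ 2 * w ^ 2) = cubicRes (v * w * u ^ 2) := by
      by_cases hv : v = 0
      · simp [hv]
      by_cases hw : w = 0
      · simp [hw]
      rw [← cubicRes_sq h3 (_ * w ^ 2),
        ← cubicRes_mul_cube h3 (v * w * u ^ 2) (mul_ne_zero hv hw)]
      congr 1
      ring
    rw [this]
    ring_nf
  simp only [e, sum_add_distrib]
  have h₁ := (abs_le.1 (abs_sum_cubicRes_triple hF h3 hab hac hbc)).2
  have h₂ := (abs_le.1 (abs_sum_cubicRes_mixed hF h3 hab hac hbc)).2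
  have h₃ := (abs_le.1 (abs_sum_cubicRes_mixed hF h3 hac hab hbc.symm)).2
  have h₄ := (abs_le.1 (abs_sum_cubicRes_mixed hF h3 hbc hab.symm hac.symm)).2
  linarith

/-- A cubic symmetric polynomial in five variables with values in `{2, -1}`, nonnegative as soon
as one of them is `2`. -/
def sieve (r₀ r₁ r₂ r₃ r₄ : ℤ) : ℤ :=
  -4 + 4 * (r₀ + r₁ + r₂ + r₃ + r₄) -
    2 * (r₀ * r₁ + r₀ * r₂ + r₀ * r₃ + r₀ * r₄ + r₁ * r₂ + r₁ * r₃ + r₁ * r₄ + r₂ * r₃ + r₂ * r₄ +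
      r₃ * r₄) +
    (r₀ * r₁ * r₂ + r₀ * r₁ * r₃ + r₀ * r₁ * r₄ + r₀ * r₂ * r₃ + r₀ * r₂ * r₄ + r₀ * r₃ * r₄ +
      r₁ * r₂ * r₃ + r₁ * r₂ * r₄ + r₁ * r₃ * r₄ + r₂ * r₃ * r₄)

theorem sieve_nonneg {r₀ r₁ r₂ r₃ r₄ : ℤ} (h₀ : r₀ = 2 ∨ r₀ = -1) (h₁ : r₁ = 2 ∨ r₁ = -1)
    (h₂ : r₂ = 2 ∨ r₂ = -1) (h₃ : r₃ = 2 ∨ r₃ = -1) (h₄ : r₄ = 2 ∨ r₄ = -1)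
    (h : r₀ = 2 ∨ r₁ = 2 ∨ r₂ = 2 ∨ r₃ = 2 ∨ r₄ = 2) : 0 ≤ sieve r₀ r₁ r₂ r₃ r₄ := by
  rcases h₀ with rfl | rfl <;> rcases h₁ with rfl | rfl <;> rcases h₂ with rfl | rfl <;>
    rcases h₃ with rfl | rfl <;> rcases h₄ with rfl | rfl <;> simp [sieve] at h ⊢

theorem card_le_of_sieve_nonneg (hF : ringChar F ≠ 2) (h3 : Fintype.card F % 3 = 1)
    {a b c d e : F} (hab : a ≠ b) (hac : a ≠ c) (had : a ≠ d) (hae : a ≠ e) (hbc : b ≠ c)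
    (hbd : b ≠ d) (hbe : b ≠ e) (hcd : c ≠ d) (hce : c ≠ e) (hde : d ≠ e)
    (h : ∀ x, 0 ≤ sieve (cubicRes (x - a)) (cubicRes (x - b)) (cubicRes (x - c))
      (cubicRes (x - d)) (cubicRes (x - e))) : Fintype.card F ≤ 2092 := by
  have hsum := sum_nonneg fun x (_ : x ∈ univ) => h x
  simp only [sieve, sum_add_distrib, sum_sub_distrib, ← mul_sum, sum_const, card_univ,
    sum_comp_sub cubicRes, sum_cubicRes h3, nsmul_eq_mul] at hsum
  have hs : 4 * (Fintype.card F : ℤ) ≤ 90 * L + 180 := by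
    linarith [neg_sum_pair_le hF h3 hab, neg_sum_pair_le hF h3 hac, neg_sum_pair_le hF h3 had,
      neg_sum_pair_le hF h3 hae, neg_sum_pair_le hF h3 hbc, neg_sum_pair_le hF h3 hbd,
      neg_sum_pair_le hF h3 hbe, neg_sum_pair_le hF h3 hcd, neg_sum_pair_le hF h3 hce,
      neg_sum_pair_le hF h3 hde, sum_triple_le hF h3 hab hac hbc, sum_triple_le hF h3 hab had hbd,
      sum_triple_le hF h3 hab hae hbe, sum_triple_le hF h3 hac had hcd,
      sum_triple_le hF h3 hac hae hce, sum_triple_le hF h3 had hae hde,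
      sum_triple_le hF h3 hbc hbd hcd, sum_triple_le hF h3 hbc hbe hce,
      sum_triple_le hF h3 hbd hbe hde, sum_triple_le hF h3 hcd hce hde]
  have hL := Nat.sqrt_le' (4 * Fintype.card F + 1)
  have hL' : hasseBound (Fintype.card F) ^ 2 ≤ 4 * (Fintype.card F : ℤ) + 1 := by
    unfold hasseBound; exact_mod_cast hL
  have : hasseBound (Fintype.card F) ≤ 91 := by nlinarith
  omega

theorem cubicRes_eq_two_of_potent {b : F} (h : b ^ (Fintype.card F / 3 + 1) = b) :
    b = 0 ∨ cubicRes b = 2 := by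
  by_cases hb : b = 0
  · exact Or.inl hb
  right
  rw [pow_succ] at h
  rw [cubicRes, if_neg hb, if_pos]
  exact mul_right_cancel₀ hb (by rw [h, one_mul])

theorem card_le_of_isCovered (hF : ringChar F ≠ 2) (h3 : Fintype.card F % 3 = 1) {I : F}
    (hI : I ^ 2 = -1) (h : IsCovered F (Fintype.card F / 3 + 1)) : Fintype.card F ≤ 2092 := by
  have h2 : (2 : F) ≠ 0 := Ring.two_ne_zero hF
  obtain ⟨h0, h1, h1', hII, h11⟩ := I_facts h2 hI
  have hρI : ∀ y : F, cubicRes (I * y) = cubicRes y := fun y => by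
    have hI3 : (-I) ^ 3 = I := by linear_combination -I * hI
    rw [← cubicRes_mul_cube h3 y (neg_ne_zero.2 h0), hI3, mul_comm]
  have hρn : ∀ y : F, cubicRes (-y) = cubicRes y := fun y => by
    rw [← cubicRes_mul_cube h3 y (neg_ne_zero.2 one_ne_zero)]
    congr 1; ring
  have h2I : (1 : F) + I ≠ 0 := fun h => h1' (by linear_combination h)
  have hone : cubicRes (1 : F) = 2 := cubicRes_one
  have hi : cubicRes I = 2 := by simpa [hone] using hρI 1
  have hunit : ∀ y z : F, y = z ∨ y = -z ∨ y = I * z ∨ y = -(I * z) →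
      cubicRes y = cubicRes z := by
    rintro y z (rfl | rfl | rfl | rfl) <;> simp only [hρn, hρI]
  have htwo : cubicRes (1 + 1 : F) = cubicRes (1 + I) := by
    rw [← cubicRes_sq h3 (1 + I), ← hρI (1 + 1)]
    congr 1
    linear_combination -hI
  have t1 : cubicRes (-1 - 1 : F) = cubicRes (1 + I) := by
    rw [← htwo]; exact hunit _ _ (Or.inr (Or.inl (by ring)))
  have t2 : cubicRes (I + I) = cubicRes (1 + I) := by
    rw [← htwo]; exact hunit _ _ (Or.inr (Or.inr (Or.inl (by ring))))
  have t3 : cubicRes (-I - I) = cubicRes (1 + I) := by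
    rw [← htwo]; exact hunit _ _ (Or.inr (Or.inr (Or.inr (by ring))))
  have t4 : cubicRes (1 - I) = cubicRes (1 + I) :=
    hunit _ _ (Or.inr (Or.inr (Or.inr (by linear_combination hI))))
  have t5 : cubicRes (-1 - I) = cubicRes (1 + I) := hunit _ _ (Or.inr (Or.inl (by ring)))
  have t6 : cubicRes (-1 + I) = cubicRes (1 + I) :=
    hunit _ _ (Or.inr (Or.inr (Or.inl (by linear_combination -hI))))
  have t7 : cubicRes (I - 1) = cubicRes (1 + I) := by rw [← t6]; congr 1; ring
  have t8 : cubicRes (I + 1) = cubicRes (1 + I) := by rw [add_comm]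
  have t9 : cubicRes (-I - 1) = cubicRes (1 + I) := by rw [← t5]; congr 1; ring
  have t10 : cubicRes (-I + 1) = cubicRes (1 + I) := by rw [← t4]; congr 1; ring
  refine card_le_of_sieve_nonneg hF h3 (a := 0) (b := 1) (c := -1) (d := I) (e := -I)
    zero_ne_one (by simp) h0.symm (by simpa using h0) h11 h1.symm
    (fun h => h1' (by rw [h, neg_neg])) h1'.symm (fun h => h1 (neg_injective h).symm) hII ?_
  intro x
  by_cases hx : x ^ 5 = x
  · have hmem := (pow_five_eq_self_iff hI).1 hx
    simp only [List.mem_cons, List.not_mem_nil, or_false] at hmem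
    rcases hmem with e | e | e | e | e <;>
      simp only [e, zero_sub, sub_zero, sub_self, sub_neg_eq_add, zero_add,
        hρn 1, hρn I, hone, hi, htwo, t1, t2, t3, t4, t5, t6, t7, t8, t9, t10, cubicRes_zero] <;>
      rcases cubicRes_dichotomy h2I with h | h <;> simp [sieve, h]
  · have hd : ∀ c : F, c ^ 5 = c → cubicRes (x - c) = 2 ∨ cubicRes (x - c) = -1 :=
      fun c hc => cubicRes_dichotomy (sub_ne_zero.2 fun e => hx (by rw [e, hc]))
    have hm : ∀ c ∈ [0, 1, -1, I, -I], c ^ 5 = c := fun c => (pow_five_eq_self_iff hI).2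
    refine sieve_nonneg (hd _ (hm _ (by simp))) (hd _ (hm _ (by simp))) (hd _ (hm _ (by simp)))
      (hd _ (hm _ (by simp))) (hd _ (hm _ (by simp))) ?_
    obtain ⟨a, b, ha, hb, rfl⟩ := h x
    rcases cubicRes_eq_two_of_potent hb with rfl | hb
    · rw [add_zero] at hx; exact absurd ha hx
    have hmem := (pow_five_eq_self_iff hI).1 ha
    simp only [List.mem_cons, List.not_mem_nil, or_false] at hmem
    rcases hmem with e | e | e | e | e <;> rw [← e, add_sub_cancel_left, hb] <;> simp

end CubicSum

/-! ### Counting and assembly -/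

section Counting

open Finset

variable {F : Type*} [Field F] [Fintype F]

theorem card_potents_le [DecidableEq F] {n : ℕ} (hn : 1 < n) : #{b : F | b ^ n = b} ≤ n := by
  have hd : (Polynomial.X ^ n - Polynomial.X : Polynomial F).natDegree = n :=
    FiniteField.X_pow_card_sub_X_natDegree_eq F hn
  have h0 : (Polynomial.X ^ n - Polynomial.X : Polynomial F) ≠ 0 :=
    FiniteField.X_pow_card_sub_X_ne_zero F hn
  refine le_trans ?_ ((Polynomial.card_roots' (Polynomial.X ^ n - Polynomial.X : Polynomial F)).trans
    hd.le)
  refine le_trans (card_le_card fun b hb => ?_) (Multiset.toFinset_card_le _)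
  simp only [mem_filter, mem_univ, true_and] at hb
  simp [h0, hb]

theorem IsCovered.card_lt [DecidableEq F] {n : ℕ} (hn : 1 < n) (h : IsCovered F n) {S : Finset F}
    (hS : ∀ a : F, a ^ 5 = a → a ∈ S) : Fintype.card F + 1 ≤ #S * n := by
  have hmem : ((0 : F), (1 : F)) ∈ S ×ˢ ({b | b ^ n = b} : Finset F) := by
    simp [hS 0 (by simp)]
  have hsub : (univ : Finset F) ⊆
      ((S ×ˢ ({b | b ^ n = b} : Finset F)).erase (0, 1)).image fun p => p.1 + p.2 := by
    intro x _
    rw [mem_image]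
    obtain ⟨a, b, ha, hb, rfl⟩ := h x
    by_cases hab : (a, b) = (0, 1)
    · refine ⟨(1, 0), ?_, ?_⟩
      · have hn0 : n ≠ 0 := by omega
        simpa [hS 1 (by simp)] using hn0
      · simp [(Prod.mk.inj hab).1, (Prod.mk.inj hab).2]
    · exact ⟨(a, b), mem_erase.2 ⟨hab, by simp [hS a ha, hb]⟩, rfl⟩
  have hle := (card_le_card hsub).trans card_image_le
  rw [card_univ, card_erase_of_mem hmem, card_product] at hle
  have hpos : 0 < #S * #({b | b ^ n = b} : Finset F) := by
    rw [← card_product]; exact card_pos.2 ⟨_, hmem⟩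
  have := Nat.mul_le_mul_left #S (card_potents_le (F := F) hn)
  omega

theorem IsCovered.card_le_mul {m : ℕ} (hm : 0 < m) (h : IsCovered F (m + 1))
    {S : Finset F} (hS : ∀ a : F, a ^ 5 = a → a ∈ S) (hSm : ∀ a ∈ S, a ≠ 0 → a ^ m = 1)
    (hneg : (-1 : F) ^ m = 1) : Fintype.card F ≤ #S * m := by
  classical
  have hsub : (univ : Finset F) ⊆
      (S ×ˢ (Polynomial.nthRootsFinset m (1 : F))).image fun p => p.1 + p.2 := by
    intro x _
    simp only [mem_image, mem_product, Polynomial.mem_nthRootsFinset hm, Prod.exists]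
    obtain ⟨a, b, ha, hb, rfl⟩ := h x
    by_cases hb0 : b = 0
    · by_cases ha0 : a = 0
      · exact ⟨1, -1, ⟨hS 1 (by simp), hneg⟩, by simp [ha0, hb0]⟩
      · exact ⟨0, a, ⟨hS 0 (by simp), hSm a (hS a ha) ha0⟩, by simp [hb0]⟩
    · refine ⟨a, b, ⟨hS a ha, ?_⟩, rfl⟩
      rw [pow_succ] at hb
      exact mul_right_cancel₀ hb0 (by rw [hb, one_mul])
  have hle := (card_le_card hsub).trans card_image_le
  rw [card_univ, card_product] at hle
  refine hle.trans (Nat.mul_le_mul_left _ ?_)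
  exact (Multiset.toFinset_card_le _).trans (Polynomial.card_nthRoots m 1)

omit [Fintype F] in
theorem IsCovered.two_mul {m : ℕ} (h : IsCovered F (m + 1)) : IsCovered F (2 * m + 1) := by
  intro x
  obtain ⟨a, b, ha, hb, rfl⟩ := h x
  exact ⟨a, b, ha, by rw [_root_.two_mul, add_assoc, pow_add, hb, ← pow_succ, hb], rfl⟩

end Counting

section Classification

open SmallFields Finset

variable {F : Type*} [Field F] [Fintype F]

theorem not_isCovered_of_even {k m : ℕ} (hq : Fintype.card F = k * m + 1) (hm : 0 < m)
    (hk : 2 ≤ k) (heven : Fintype.card F % 2 = 0) : ¬ IsCovered F (m + 1) := by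
  classical
  intro h
  have h2 : ringChar F = 2 := FiniteField.even_card_iff_char_two.2 heven
  have hc : CharP F 2 := by rw [← h2]; infer_instance
  have h20 : (2 : F) = 0 := by exact_mod_cast CharP.cast_eq_zero F 2
  have hS : ∀ a : F, a ^ 5 = a → a ∈ ({0, 1} : Finset F) := by
    intro a ha
    have : a * (a - 1) ^ 4 = 0 := by
      linear_combination ha + (-2 * a ^ 4 + 3 * a ^ 3 - 2 * a ^ 2 + a) * h20
    rcases mul_eq_zero.1 this with h | h
    · simp [h]
    · simp [sub_eq_zero.1 (pow_eq_zero_iff (by norm_num) |>.1 h)]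
  have hle := h.card_lt (by omega) hS
  rw [card_pair zero_ne_one] at hle
  have : k ≤ 2 := by
    by_contra hk'
    have : 3 * m ≤ k * m := Nat.mul_le_mul_right m (by omega)
    omega
  obtain rfl : k = 2 := by omega
  omega

theorem mem_pairs_of_three_mod_four {k m : ℕ} (hq : Fintype.card F = k * m + 1) (hm : 0 < m)
    (hk : 2 ≤ k) (h4 : Fintype.card F % 4 = 3) (h : IsCovered F (m + 1)) :
    (Fintype.card F, m + 1) ∈ pairs := by
  classical
  have hF : ringChar F ≠ 2 := fun h => by
    have := FiniteField.even_card_iff_char_two.1 h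
    omega
  have hns : ¬ IsSquare (-1 : F) := by
    rw [FiniteField.isSquare_neg_one_iff]; simp [h4]
  have hS : ∀ a : F, a ^ 5 = a → a = 0 ∨ a = 1 ∨ a = -1 := by
    intro a ha
    have : a * ((a - 1) * ((a - -1) * (a ^ 2 + 1))) = 0 := by linear_combination ha
    rcases mul_eq_zero.1 this with h | h
    · exact Or.inl h
    rcases mul_eq_zero.1 h with h | h
    · exact Or.inr (Or.inl (sub_eq_zero.1 h))
    rcases mul_eq_zero.1 h with h | h
    · exact Or.inr (Or.inr (sub_eq_zero.1 h))
    · exact absurd ⟨a, by linear_combination -h⟩ hns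
  have hS' : ∀ a : F, a ^ 5 = a → a ∈ ({0, 1, -1} : Finset F) := by simpa using hS
  have hcard : #({0, 1, -1} : Finset F) ≤ 3 := card_le_three
  have hle := (h.card_lt (by omega) hS').trans (Nat.mul_le_mul_right _ hcard)
  rcases (by omega : k = 2 ∨ k = 3 ∨ 4 ≤ k) with rfl | rfl | hk
  · have h7 := QuadSum.card_le_of_isCovered' hF
      (quadraticChar_neg_one_iff_not_isSquare.2 hns) hS
      (by rwa [show Fintype.card F / 2 = m by omega])
    rw [hq] at h7 ⊢
    have : m = 1 ∨ m = 3 := by omega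
    rcases this with rfl | rfl <;> decide
  · have heven : Even m := by rw [Nat.even_iff]; omega
    have := (h.card_le_mul hm hS' (by
      intro a ha ha0
      simp only [mem_insert, mem_singleton, ha0, false_or] at ha
      rcases ha with rfl | rfl
      · simp
      · exact heven.neg_one_pow) heven.neg_one_pow).trans (Nat.mul_le_mul_right _ hcard)
    omega
  · have h1 : 4 * m ≤ k * m := Nat.mul_le_mul_right m hk
    obtain rfl : m = 1 := by omega
    omega

theorem mem_pairs_of_one_mod_four {k m : ℕ} (hq : Fintype.card F = k * m + 1) (hm : 0 < m)
    (hk : 2 ≤ k) (h4 : Fintype.card F % 4 = 1) (h : IsCovered F (m + 1)) :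
    (Fintype.card F, m + 1) ∈ pairs := by
  classical
  have hF : ringChar F ≠ 2 := fun h => by
    have := FiniteField.even_card_iff_char_two.1 h
    omega
  obtain ⟨I, hI⟩ : IsSquare (-1 : F) := by
    rw [FiniteField.isSquare_neg_one_iff, h4]; simp
  replace hI : I ^ 2 = -1 := by rw [hI, pow_two]
  have h2 : (2 : F) ≠ 0 := Ring.two_ne_zero hF
  have hS : ∀ a : F, a ^ 5 = a → a ∈ QuadSum.fivePotents I := fun a =>
    (QuadSum.mem_fivePotents hI).2
  have hcard := QuadSum.card_fivePotents h2 hI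
  have hle := h.card_lt (by omega) hS
  rw [hcard] at hle
  have hfin : ∀ b, (k, b) ∈ bounds → Fintype.card F ≤ b → (Fintype.card F, m + 1) ∈ pairs :=
    fun b hb hqb => mem_pairs_of_isCovered rfl h4 hb hqb (by rw [hq]; simp)
      (by rw [hq, Nat.add_sub_cancel, Nat.mul_div_cancel_left m (by omega)]) h
  rcases (by omega : k = 2 ∨ k = 3 ∨ k = 4 ∨ k = 5 ∨ k = 6 ∨ 7 ≤ k) with
    rfl | rfl | rfl | rfl | rfl | hk
  · exact hfin 1237 (by decide) (QuadSum.card_le_of_isCovered hF hI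
      (by rwa [show Fintype.card F / 2 = m by omega]))
  · exact hfin 2092 (by decide) (CubicSum.card_le_of_isCovered hF (by omega) hI
      (by rwa [show Fintype.card F / 3 = m by omega]))
  · refine hfin 125 (by decide) ?_
    have h' := h.two_mul
    have hle' := QuadSum.card_le_of_isCovered hF hI
      (by rwa [show Fintype.card F / 2 = 2 * m by omega])
    have hmem := mem_pairs_of_isCovered (k := 2) rfl h4 (by decide) hle' (by rw [hq]; omega)
      (by rw [hq]; omega) h'
    exact (by decide : ∀ p ∈ pairs, p.1 ≤ 125) _ hmem
  · have h4m : 4 ∣ m := by omega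
    obtain ⟨t, rfl⟩ := h4m
    have hpow : ∀ a : F, a ^ 5 = a → a ≠ 0 → a ^ (4 * t) = 1 := by
      intro a ha ha0
      rw [pow_mul, mul_right_cancel₀ ha0 (by rw [← pow_succ, ha, one_mul] : a ^ 4 * a = 1 * a),
        one_pow]
    have := h.card_le_mul hm hS (fun a ha => hpow a ((QuadSum.mem_fivePotents hI).1 ha))
      (hpow _ (by norm_num) (by simp))
    rw [hcard] at this
    omega
  · exact hfin 13 (by decide) (by omega)
  · have h1 : 7 * m ≤ k * m := Nat.mul_le_mul_right m hk
    obtain rfl : m = 1 := by omega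
    obtain rfl | rfl : k = 7 ∨ k = 8 := by omega
    · omega
    · exact hfin 9 (by decide) (by omega)

theorem isCovered_iff_mem_pairs {n : ℕ} (hn1 : 1 < n) (hnq : n < Fintype.card F)
    (hdvd : (n - 1) ∣ (Fintype.card F - 1)) : IsCovered F n ↔ (Fintype.card F, n) ∈ pairs := by
  refine ⟨fun h => ?_, isCovered_of_mem_pairs rfl⟩
  obtain ⟨m, rfl⟩ : ∃ m, n = m + 1 := ⟨n - 1, by omega⟩
  obtain ⟨k, hk⟩ := hdvd
  rw [Nat.add_sub_cancel, mul_comm] at hk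
  have hq : Fintype.card F = k * m + 1 := by omega
  have hk2 : 2 ≤ k := by
    by_contra hk'
    have : k * m ≤ 1 * m := Nat.mul_le_mul_right m (by omega)
    omega
  rcases (by omega : Fintype.card F % 2 = 0 ∨ Fintype.card F % 4 = 1 ∨ Fintype.card F % 4 = 3) with
    h' | h' | h'
  · exact absurd h (not_isCovered_of_even hq (by omega) hk2 h')
  · exact mem_pairs_of_one_mod_four hq (by omega) hk2 h' h
  · exact mem_pairs_of_three_mod_four hq (by omega) hk2 h' h

end Classification

/-- Every element of the finite field `F` with `q` elements is the sum of a `5`-potent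
and an `n`-potent (with `1 < n < q` and `(n-1) ∣ (q-1)`) if and only if `(q, n)` is one of
the 18 listed pairs. -/
theorem sum_of_five_potent_and_n_potent_iff
    (q n : ℕ) (hq : IsPrimePow q)
    (F : Type*) [Field F] [Fintype F] (hF : Fintype.card F = q)
    (hn1 : 1 < n) (hnq : n < q) (hdvd : (n - 1) ∣ (q - 1)) :
    (∀ γ : F, ∃ a b : F, a ^ 5 = a ∧ b ^ n = b ∧ a + b = γ) ↔
      (q, n) ∈ ({(3, 2), (5, 2), (5, 3), (7, 4), (9, 3), (9, 5), (13, 5), (13, 7),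
        (17, 9), (25, 9), (25, 13), (29, 15), (41, 21), (49, 25), (53, 27),
        (73, 37), (81, 41), (125, 63)} : Set (ℕ × ℕ)) := by
  subst hF
  refine (isCovered_iff_mem_pairs hn1 hnq hdvd).trans ?_
  simp [SmallFields.pairs]
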